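/- arXiv:2510.15743 — 5 statements merged into one kernel-verified Lean document; each statement's English description precedes it below -/
import Mathlib

section
/- Let L/J be an extension of fields of characteristic 2 such that J contains a primitive cube root of unity. Then L/J is Galois with Galois group isomorphic to the alternating group A₄ on four letters if and only if the following two conditions hold: (1) there exists an intermediate field K of L/J such that (a) K = J(c) for some element c ∈ K \ J with c³ ∈ J, and (b) K/J is Galois with Galois group cyclic of order 3 generated by an automorphism ρ̄ satisfying ρ̄(c) = ζc for some primitive cube root of unity ζ ∈ J; and (2) there exist u, v ∈ L with L = K(u, v) and u² − u = α for some α ∈ K such that (a) α ≠ ξ² − ξ for every ξ ∈ K, (b) α + ρ̄(α) + ρ̄²(α) = 0 (equivalently Tr_{K/J}(α) = 0), and (c) v² − v = ρ̄(α). -/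
/-!
Suppose first that the Galois group is `A₄`, and let `K` be the fixed field of its Klein four-group
`V`. The fibre sums of an element of trace `1` give a partition of unity `w₀ + w₁ + w₂ + w₃ = 1`
that `A₄` permutes through its natural action. A double transposition in `V` either preserves the
pair `{1, 2}` or exchanges it with its complement, so it moves `u = w₁ + w₂` by `0` or `1`; hence
`u ^ 2 - u ∈ K`. The three-cycle `1 ↦ 2 ↦ 3` carries `u` to `v = w₂ + w₃` and then to `u + v`.

Conversely, every Artin–Schreier polynomial `X ^ 2 - X - ρ ^ i α` splits in `L = K(u, v)`, since its
roots are `u`, `v` or `u + v` up to adding `1`; therefore `L / J` is Galois. None of these three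
roots lies in `K`, which forces the group `V` of `L / K` to have order `4`. A lift `t` of `ρ` has
`t u ∈ {v, v + 1}`, so an element commuting with `t` moves `u` and `v` by the same amount and fixes
`u + v`. Hence `V` is not central, which singles out `A₄` among the groups of order `12` with a
normal subgroup of order `4`: otherwise a Sylow `3`-subgroup would be normal and centralize `V`.
-/

open Polynomial Module IntermediateField

section AlternatingGroupFour

theorem nonempty_mulEquiv_alternatingGroup_of_card_eq_twelve {G : Type*} [Group G]
    (hG : Nat.card G = 12) {T : Subgroup G} (hT : Nat.card T = 3) (hnormal : ¬ T.Normal) :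
    Nonempty (G ≃* alternatingGroup (Fin 4)) := by
  have : Finite G := Nat.finite_of_card_ne_zero (by lia)
  have hindex : Nat.card (G ⧸ T) = 4 := by
    have := T.card_eq_card_quotient_mul_card_subgroup
    lia
  have hcore : T.normalCore = ⊥ := by
    have hdvd := Subgroup.card_dvd_of_le T.normalCore_le
    rw [hT, Nat.dvd_prime Nat.prime_three] at hdvd
    refine Subgroup.card_eq_one.mp (hdvd.resolve_right fun hcard ↦ hnormal ?_)
    rw [← Subgroup.eq_of_le_of_card_ge T.normalCore_le (by rw [hT, hcard])]
    infer_instance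
  let cosetAction : G →* Equiv.Perm (Fin 4) :=
    (Finite.equivFinOfCardEq hindex).permCongrHom.toMonoidHom.comp (MulAction.toPermHom G (G ⧸ T))
  have hinj : Function.Injective cosetAction := by
    refine (Finite.equivFinOfCardEq hindex).permCongrHom.injective.comp ?_
    rw [← MonoidHom.ker_eq_bot_iff, ← Subgroup.normalCore_eq_ker, hcore]
  have hrange : cosetAction.range.index = 2 := by
    have hcard := cosetAction.range.card_mul_index
    rw [← Nat.card_congr (MonoidHom.ofInjective hinj).toEquiv, hG, Nat.card_perm, Nat.card_fin,
      show Nat.factorial 4 = 12 * 2 from rfl] at hcard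
    exact Nat.eq_of_mul_eq_mul_left (by simp) hcard
  exact ⟨(MonoidHom.ofInjective hinj).trans
    (MulEquiv.subgroupCongr (Equiv.Perm.eq_alternatingGroup_of_index_eq_two hrange))⟩

theorem nonempty_mulEquiv_alternatingGroup_of_not_le_center {G : Type*} [Group G]
    (hG : Nat.card G = 12) {V : Subgroup G} [V.Normal] (hV : Nat.card V = 4)
    (hcenter : ¬ V ≤ Subgroup.center G) : Nonempty (G ≃* alternatingGroup (Fin 4)) := by
  have : Finite G := Nat.finite_of_card_ne_zero (by lia)
  obtain ⟨T, hT⟩ := Sylow.exists_subgroup_card_pow_prime (G := G) 3 (n := 1) (by rw [hG]; decide)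
  rw [pow_one] at hT
  refine nonempty_mulEquiv_alternatingGroup_of_card_eq_twelve hG hT fun _ ↦ hcenter ?_
  have hcompl : T.IsComplement' V :=
    Subgroup.isComplement'_of_coprime (by rw [hT, hV, hG]) (by rw [hT, hV]; decide)
  have hTV : T ≤ Subgroup.centralizer V := fun t ht ↦ Subgroup.mem_centralizer_iff.mpr fun v hv ↦
    (Subgroup.commute_of_normal_of_disjoint T V ‹_› ‹_› hcompl.disjoint t v ht hv).symm
  have hVV : V ≤ Subgroup.centralizer V :=
    Subgroup.le_centralizer_iff_isMulCommutative.mpr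
      (IsPGroup.isMulCommutative_of_card_eq_prime_sq (p := 2) hV)
  refine Subgroup.centralizer_eq_top_iff_subset.mp ?_
  rw [eq_top_iff, ← hcompl.sup_eq_top]
  exact sup_le hTV hVV

theorem mem_kleinFour_fin_four_iff {π : alternatingGroup (Fin 4)} :
    π ∈ alternatingGroup.kleinFour (Fin 4) ↔ π * π = 1 := by
  rw [← SetLike.mem_coe, alternatingGroup.coe_kleinFour_of_card_eq_four (Nat.card_fin 4)]
  constructor
  · intro hπ
    have := alternatingGroup.kleinFour_isKleinFour (α := Fin 4) (Nat.card_fin 4)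
    rw [← alternatingGroup.coe_kleinFour_of_card_eq_four (Nat.card_fin 4)] at hπ
    exact congrArg Subtype.val (IsKleinFour.mul_self (⟨π, hπ⟩ : alternatingGroup.kleinFour (Fin 4)))
  · intro hπ
    have hcycle := alternatingGroup.mem_kleinFour_of_order_two_pow (Nat.card_fin 4) π.2 (n := 1)
      (orderOf_dvd_of_pow_eq_one (by rw [pow_one, sq]; exact congrArg Subtype.val hπ))
    exact hcycle.imp (fun h ↦ Subtype.ext (Equiv.Perm.cycleType_eq_zero.mp h)) id

theorem coe_eq_of_mem_kleinFour_fin_four {π : alternatingGroup (Fin 4)}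
    (hπ : π ∈ alternatingGroup.kleinFour (Fin 4)) :
    (π : Equiv.Perm (Fin 4)) = 1 ∨ (π : Equiv.Perm (Fin 4)) = .swap 0 1 * .swap 2 3 ∨
      (π : Equiv.Perm (Fin 4)) = .swap 0 2 * .swap 1 3 ∨
      (π : Equiv.Perm (Fin 4)) = .swap 0 3 * .swap 1 2 := by
  have hinvolution : ∀ σ : alternatingGroup (Fin 4), σ * σ = 1 →
    (σ : Equiv.Perm (Fin 4)) = 1 ∨ (σ : Equiv.Perm (Fin 4)) = .swap 0 1 * .swap 2 3 ∨
      (σ : Equiv.Perm (Fin 4)) = .swap 0 2 * .swap 1 3 ∨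
      (σ : Equiv.Perm (Fin 4)) = .swap 0 3 * .swap 1 2 := by decide
  exact hinvolution π (mem_kleinFour_fin_four_iff.mp hπ)

theorem index_kleinFour_fin_four : (alternatingGroup.kleinFour (Fin 4)).index = 3 := by
  have hcard := (alternatingGroup.kleinFour (Fin 4)).card_mul_index
  rw [alternatingGroup.kleinFour_card_of_card_eq_four (Nat.card_fin 4),
    alternatingGroup.card_of_card_eq_four (Nat.card_fin 4)] at hcard
  lia

end AlternatingGroupFour

section GaloisTheory

theorem splits_minpoly_of_forall_splits_map {J K L : Type*} [Field J] [Field K] [Field L]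
    [Algebra J K] [Algebra K L] [Algebra J L] [IsScalarTower J K L] [FiniteDimensional J K]
    [IsGalois J K] {p : K[X]} (hp : p ≠ 0)
    (hsplits : ∀ g : Gal(K/J), ((p.map (g : K →+* K)).map (algebraMap K L)).Splits)
    {x : L} (hx : aeval x p = 0) : ((minpoly J x).map (algebraMap J L)).Splits := by
  let N : K[X] := ∏ g : Gal(K/J), p.map (g : K →+* K)
  have hNsplits : (N.map (algebraMap K L)).Splits := by
    rw [Polynomial.map_prod]
    exact Splits.prod fun g _ ↦ hsplits g
  have hNfixed (h : Gal(K/J)) : N.map (h : K →+* K) = N := by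
    rw [Polynomial.map_prod]
    exact Fintype.prod_equiv (Equiv.mulLeft h) _ _ fun g ↦ Polynomial.map_map _ _ p
  have hN0 : N ≠ 0 := Finset.prod_ne_zero_iff.mpr fun g _ ↦ Polynomial.map_ne_zero hp
  have hNx : aeval x N = 0 := by
    refine aeval_eq_zero_of_dvd_aeval_eq_zero (Finset.dvd_prod_of_mem _ (Finset.mem_univ 1)) ?_
    simpa [show ((1 : Gal(K/J)) : K →+* K) = RingHom.id K from rfl] using hx
  obtain ⟨q, hq⟩ : ∃ q : J[X], q.map (algebraMap J K) = N := by
    refine (lifts_iff_coeff_lifts N).mpr fun n ↦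
      (IsGalois.mem_range_algebraMap_iff_fixed (N.coeff n)).mpr fun h ↦ ?_
    conv_rhs => rw [← hNfixed h, coeff_map]
    rfl
  have hqL : q.map (algebraMap J L) = N.map (algebraMap K L) := by
    rw [← hq, Polynomial.map_map, ← IsScalarTower.algebraMap_eq]
  refine Splits.of_dvd (hqL ▸ hNsplits) ?_ (Polynomial.map_dvd _ (minpoly.dvd J x ?_))
  · rw [hqL]
    exact Polynomial.map_ne_zero hN0
  · rw [← hNx, ← hq, aeval_map_algebraMap]

variable {J L : Type*} [Field J] [Field L] [Algebra J L]

theorem isGalois_of_sup_adjoin_eq_top {K : IntermediateField J L} [FiniteDimensional J K]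
    [IsGalois J K] {S : Set L} (htop : K ⊔ adjoin J S = ⊤)
    (hS : ∀ x ∈ S, ∃ p : K[X], p.Separable ∧ aeval x p = 0 ∧
      ∀ g : Gal(K/J), ((p.map (g : K →+* K)).map (algebraMap K L)).Splits) :
    IsGalois J L := by
  have hgen : adjoin J ((K : Set L) ∪ S) = ⊤ := by rw [adjoin_union, adjoin_self, htop]
  have hroots : ∀ x ∈ (K : Set L) ∪ S, ∃ p : K[X], p.Separable ∧ aeval x p = 0 ∧
      ∀ g : Gal(K/J), ((p.map (g : K →+* K)).map (algebraMap K L)).Splits := by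
    rintro x (hx | hx)
    · refine ⟨X - C ⟨x, hx⟩, separable_X_sub_C, ?_, fun g ↦ ?_⟩
      · simp [IntermediateField.algebraMap_apply]
      · simp only [Polynomial.map_sub, map_X, map_C]
        exact Splits.X_sub_C _
    · exact hS x hx
  have hgenerators : ∀ x ∈ (K : Set L) ∪ S,
      IsSeparable J x ∧ ((minpoly J x).map (algebraMap J L)).Splits := by
    intro x hx
    obtain ⟨p, hsep, hpx, hsplits⟩ := hroots x hx
    have hsepK : IsSeparable K x := hsep.of_dvd (minpoly.dvd K x hpx)
    exact ⟨IsSeparable.of_algebra_isSeparable_of_isSeparable J hsepK,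
      splits_minpoly_of_forall_splits_map hsep.ne_zero hsplits hpx⟩
  have hsep : Algebra.IsSeparable J L := by
    have := (isSeparable_adjoin_iff_isSeparable J L).mpr fun x hx ↦ (hgenerators x hx).1
    rw [hgen] at this
    exact AlgEquiv.Algebra.isSeparable topEquiv
  have hnormal : Normal J L := normal_iff.mpr fun x ↦
    ⟨Algebra.IsSeparable.isIntegral J x, splits_of_mem_adjoin J L
      (fun y hy ↦ ⟨(hgenerators y hy).1.isIntegral, (hgenerators y hy).2⟩) (hgen ▸ mem_top)⟩
  exact isGalois_iff.mpr ⟨hsep, hnormal⟩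

theorem finiteDimensional_of_sup_adjoin_eq_top [Algebra.IsIntegral J L]
    {K : IntermediateField J L} [FiniteDimensional J K] {S : Set L} (hS : S.Finite)
    (htop : K ⊔ adjoin J S = ⊤) : FiniteDimensional J L := by
  have := hS.to_subtype
  have : FiniteDimensional J (adjoin J S) :=
    finiteDimensional_adjoin fun x _ ↦ Algebra.IsIntegral.isIntegral x
  have := finiteDimensional_sup K (adjoin J S)
  rw [htop] at this
  exact topEquiv.toLinearEquiv.finiteDimensional

theorem mem_fixingSubgroup_adjoin_iff {S : Set L} {σ : Gal(L/J)} :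
    σ ∈ (adjoin J S).fixingSubgroup ↔ ∀ x ∈ S, σ x = x := by
  rw [← Subgroup.zpowers_le, ← le_iff_le, adjoin_le_iff]
  refine forall₂_congr fun x _ ↦ ?_
  have := Subgroup.zpowers_le (g := σ) (H := MulAction.stabilizer Gal(L/J) x)
  rw [SetLike.mem_coe, mem_fixedField_iff]
  exact this

theorem sup_adjoin_eq_top_iff [IsGalois J L] {K : IntermediateField J L} {S : Set L} :
    K ⊔ adjoin J S = ⊤ ↔ ∀ σ ∈ K.fixingSubgroup, (∀ x ∈ S, σ x = x) → σ = 1 := by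
  have hmem (σ : Gal(L/J)) : σ ∈ (K ⊔ adjoin J S).fixingSubgroup ↔
      σ ∈ K.fixingSubgroup ∧ ∀ x ∈ S, σ x = x := by
    rw [fixingSubgroup_sup, Subgroup.mem_inf, mem_fixingSubgroup_adjoin_iff]
  have hbot : K ⊔ adjoin J S = ⊤ ↔ (K ⊔ adjoin J S).fixingSubgroup = ⊥ := by
    refine ⟨fun h ↦ h ▸ fixingSubgroup_top, fun h ↦ ?_⟩
    rw [← InfiniteGalois.fixedField_fixingSubgroup (K ⊔ adjoin J S), h, fixedField_bot]
  simp only [hbot, Subgroup.eq_bot_iff_forall, hmem, and_imp]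

theorem exists_mem_fixingSubgroup_apply_ne [IsGalois J L] {K : IntermediateField J L} {x : L}
    (hx : x ∉ K) : ∃ σ ∈ K.fixingSubgroup, σ x ≠ x := by
  contrapose! hx
  rw [← InfiniteGalois.fixedField_fixingSubgroup K]
  exact fun σ ↦ hx σ σ.2

theorem mem_zpowers_restrictNormalHom_of_finrank_prime [IsGalois J L]
    {K : IntermediateField J L} [IsGalois J K] (hK : (finrank J K).Prime) {σ : Gal(L/J)}
    (hσ : σ ∉ K.fixingSubgroup) (g : Gal(K/J)) :
    g ∈ Subgroup.zpowers (AlgEquiv.restrictNormalHom K σ) := by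
  have : Fact (finrank J K).Prime := ⟨hK⟩
  have : FiniteDimensional J K := .of_finrank_pos hK.pos
  refine mem_zpowers_of_prime_card (IsGalois.card_aut_eq_finrank J K) fun h ↦ hσ ?_
  rwa [← restrictNormalHom_ker, MonoidHom.mem_ker]

theorem exists_equivariant_sum_eq_one [FiniteDimensional J L] [IsGalois J L] {ι : Type*}
    [Fintype ι] [Nonempty ι] (φ : Gal(L/J) →* Equiv.Perm ι) :
    ∃ w : ι → L, (∀ σ i, σ (w i) = w (φ σ i)) ∧ ∑ i, w i = 1 := by
  classical
  obtain ⟨x, hx⟩ := Algebra.trace_surjective J L 1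
  let i₀ : ι := Classical.arbitrary ι
  refine ⟨fun i ↦ ∑ τ with φ τ i₀ = i, τ x, fun σ i ↦ ?_, ?_⟩
  · rw [map_sum]
    exact Finset.sum_equiv (Equiv.mulLeft σ) (by simp) (by simp)
  · rw [Finset.sum_fiberwise Finset.univ (fun τ ↦ φ τ i₀), ← trace_eq_sum_automorphisms, hx,
      map_one]

theorem exists_isPrimitiveRoot_apply_eq_mul {K : Type*} [Field K] [Algebra J K]
    [FiniteDimensional J K] [IsGalois J K] {n : ℕ} (hn : finrank J K = n) {ζ₀ : J}
    (hζ₀ : IsPrimitiveRoot ζ₀ n) {ρ : Gal(K/J)} (hρ : ∀ g, g ∈ Subgroup.zpowers ρ) :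
    ∃ (ζ : J) (c : K), IsPrimitiveRoot ζ n ∧ ρ c = algebraMap J K ζ * c ∧
      c ^ n ∈ (algebraMap J K).range ∧ J⟮c⟯ = ⊤ := by
  subst hn
  have : IsCyclic Gal(K/J) := ⟨ρ, hρ⟩
  have hζ : (primitiveRoots (finrank J K) J).Nonempty :=
    ⟨ζ₀, (mem_primitiveRoots finrank_pos).mpr hζ₀⟩
  obtain ⟨c, ⟨a, ha⟩, hc⟩ := exists_root_adjoin_eq_top_of_isCyclic J K hζ
  have hirr := irreducible_X_pow_sub_C_of_root_adjoin_eq_top ha.symm hc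
  have := isSplittingField_X_pow_sub_C_of_root_adjoin_eq_top hζ ha.symm hc
  have : NeZero (finrank J K) := ⟨finrank_pos.ne'⟩
  let χ := autEquivRootsOfUnity hζ hirr K
  refine ⟨((χ ρ : Jˣ) : J), c, ?_, ?_, ⟨a, ha⟩, hc⟩
  · rw [IsPrimitiveRoot.coe_units_iff, IsPrimitiveRoot.iff_orderOf, Subgroup.orderOf_coe,
      χ.orderOf_eq, orderOf_eq_card_of_forall_mem_zpowers hρ, IsGalois.card_aut_eq_finrank]
  · rw [← autEquivRootsOfUnity_smul hζ hirr K ha.symm ρ, ← Algebra.smul_def]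
    rfl

theorem notMem_range_algebraMap_of_adjoin_eq {K : IntermediateField J L} (hK : finrank J K ≠ 1)
    {c : L} (hc : J⟮c⟯ = K) : c ∉ (algebraMap J L).range := fun hmem ↦ by
  have hbot : J⟮c⟯ = ⊥ := adjoin_simple_eq_bot_iff.mpr (mem_bot.mpr hmem)
  exact hK (finrank_eq_one_iff.mpr (hc.symm.trans hbot))

end GaloisTheory

section CharTwo

theorem sq_sub_self_add {R : Type*} [CommRing R] [CharP R 2] (x y : R) :
    (x + y) ^ 2 - (x + y) = (x ^ 2 - x) + (y ^ 2 - y) := by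
  rw [CharTwo.add_sq]
  ring

theorem sq_sub_self_eq_iff {R : Type*} [CommRing R] [IsDomain R] [CharP R 2] {x y : R} :
    x ^ 2 - x = y ^ 2 - y ↔ x = y ∨ x = y + 1 := by
  have hfactor : (x - y) * (x - (y + 1)) = (x ^ 2 - x) - (y ^ 2 - y) := by
    linear_combination (y ^ 2 - x * y) * (CharTwo.two_eq_zero : (2 : R) = 0)
  rw [← sub_eq_zero, ← hfactor, mul_eq_zero, sub_eq_zero, sub_eq_zero]

theorem separable_X_sq_sub_X_sub_C {R : Type*} [CommRing R] [CharP R 2] (a : R) :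
    (X ^ 2 - X - C a : R[X]).Separable := by
  have hderiv : derivative (X ^ 2 - X - C a : R[X]) = -1 := by
    simp [CharTwo.add_self_eq_zero]
  rw [separable_def, hderiv]
  exact isCoprime_one_right.neg_right

theorem splits_X_sq_sub_X_sub_C {R : Type*} [CommRing R] [CharP R 2] {a w : R}
    (hw : w ^ 2 - w = a) : (X ^ 2 - X - C a : R[X]).Splits := by
  have hfactor : (X ^ 2 - X - C a : R[X]) = (X - C w) * (X - C (w + 1)) := by
    simp only [← hw, map_sub, map_pow, map_add, map_one]
    linear_combination (C w * X - C w ^ 2) * (CharTwo.two_eq_zero : (2 : R[X]) = 0)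
  rw [hfactor]
  exact (Splits.X_sub_C w).mul (Splits.X_sub_C _)

end CharTwo

section ArtinSchreier

variable {J L : Type*} [Field J] [Field L] [Algebra J L]

theorem apply_eq_or_eq_add_one_of_mem_fixingSubgroup [CharP L 2] {K : IntermediateField J L} {x : L}
    (hx : x ^ 2 - x ∈ K) {σ : Gal(L/J)} (hσ : σ ∈ K.fixingSubgroup) :
    σ x = x ∨ σ x = x + 1 := by
  rw [← sq_sub_self_eq_iff, ← map_pow, ← map_sub]
  exact hσ ⟨_, hx⟩

theorem apply_eq_apply_of_apply_eq_iff {σ τ : Gal(L/J)} {x : L}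
    (hσ : σ x = x ∨ σ x = x + 1) (hτ : τ x = x ∨ τ x = x + 1) (hiff : σ x = x ↔ τ x = x) :
    σ x = τ x := by
  by_cases hfix : σ x = x
  · rw [hfix, hiff.mp hfix]
  · rw [hσ.resolve_left hfix, hτ.resolve_left (mt hiff.mpr hfix)]

theorem mul_self_apply_of_apply_eq_or_eq_add_one [CharP L 2] {σ : Gal(L/J)} {x : L}
    (hσ : σ x = x ∨ σ x = x + 1) : (σ * σ) x = x := by
  rcases hσ with h | h <;> simp [AlgEquiv.mul_apply, h, add_assoc, CharTwo.add_self_eq_zero]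

/-- The Artin–Schreier data of condition (2): `L = K(u, v)`, where `u` and `v` are Artin–Schreier
roots of `α` and `ρ α`, for an element `α` of trace zero under `ρ` (taken to have order three) that
is not itself of the form `ξ ^ 2 - ξ` in `K`. -/
structure IsArtinSchreierPair {K : IntermediateField J L} (ρ : Gal(K/J)) (α : K) (u v : L) :
    Prop where
  sup_adjoin_eq_top : K ⊔ adjoin J {u, v} = ⊤
  sq_sub_self_left : u ^ 2 - u = α
  ne_sq_sub_self : ∀ ξ : K, α ≠ ξ ^ 2 - ξ
  trace_eq_zero : α + ρ α + ρ (ρ α) = 0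
  sq_sub_self_right : v ^ 2 - v = (ρ α : K)

namespace IsArtinSchreierPair

variable {K : IntermediateField J L} {ρ : Gal(K/J)} {α : K} {u v : L}

theorem notMem (h : IsArtinSchreierPair ρ α u v) {g : Gal(K/J)} {w : L}
    (hw : w ^ 2 - w = (g α : K)) : w ∉ K := by
  intro hwK
  refine h.ne_sq_sub_self (g.symm ⟨w, hwK⟩) (g.injective ?_)
  rw [map_sub, map_pow, AlgEquiv.apply_symm_apply]
  exact Subtype.ext hw.symm

theorem left_notMem (h : IsArtinSchreierPair ρ α u v) : u ∉ K :=
  h.notMem (g := 1) h.sq_sub_self_left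

theorem right_notMem (h : IsArtinSchreierPair ρ α u v) : v ∉ K :=
  h.notMem h.sq_sub_self_right

theorem finiteDimensional [FiniteDimensional J K] [IsGalois J L]
    (h : IsArtinSchreierPair ρ α u v) : FiniteDimensional J L :=
  finiteDimensional_of_sup_adjoin_eq_top (Set.toFinite {u, v}) h.sup_adjoin_eq_top

theorem algEquiv_eq_one [IsGalois J L] (h : IsArtinSchreierPair ρ α u v) {σ : Gal(L/J)}
    (hσ : σ ∈ K.fixingSubgroup) (hu : σ u = u) (hv : σ v = v) : σ = 1 :=
  sup_adjoin_eq_top_iff.mp h.sup_adjoin_eq_top σ hσ (by simp [hu, hv])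

variable [CharP L 2]

theorem sq_sub_self_add (h : IsArtinSchreierPair ρ α u v) :
    (u + v) ^ 2 - (u + v) = (ρ (ρ α) : K) := by
  have htrace : (α : L) + (ρ α : K) + (ρ (ρ α) : K) = 0 := congrArg Subtype.val h.trace_eq_zero
  rw [_root_.sq_sub_self_add, h.sq_sub_self_left, h.sq_sub_self_right]
  exact CharTwo.add_eq_zero.mp htrace

theorem add_notMem (h : IsArtinSchreierPair ρ α u v) : u + v ∉ K :=
  h.notMem (g := ρ * ρ) h.sq_sub_self_add

theorem apply_left (h : IsArtinSchreierPair ρ α u v) {σ : Gal(L/J)}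
    (hσ : σ ∈ K.fixingSubgroup) : σ u = u ∨ σ u = u + 1 :=
  apply_eq_or_eq_add_one_of_mem_fixingSubgroup (h.sq_sub_self_left ▸ α.2) hσ

theorem apply_right (h : IsArtinSchreierPair ρ α u v) {σ : Gal(L/J)}
    (hσ : σ ∈ K.fixingSubgroup) : σ v = v ∨ σ v = v + 1 :=
  apply_eq_or_eq_add_one_of_mem_fixingSubgroup (h.sq_sub_self_right ▸ (ρ α).2) hσ

theorem exists_sq_sub_self_eq (h : IsArtinSchreierPair ρ α u v) (hρ : orderOf ρ = 3)
    {g : Gal(K/J)} (hg : g ∈ Subgroup.zpowers ρ) : ∃ w : L, w ^ 2 - w = (g α : K) := by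
  classical
  have hfin : IsOfFinOrder ρ := orderOf_pos_iff.mp (by lia)
  rw [hfin.mem_zpowers_iff_mem_range_orderOf, hρ] at hg
  obtain ⟨n, hn, rfl⟩ := Finset.mem_image.mp hg
  match n, Finset.mem_range.mp hn with
  | 0, _ => exact ⟨u, by simpa using h.sq_sub_self_left⟩
  | 1, _ => exact ⟨v, by simpa using h.sq_sub_self_right⟩
  | 2, _ => exact ⟨u + v, by simpa [sq ρ] using h.sq_sub_self_add⟩

theorem isGalois [FiniteDimensional J K] [IsGalois J K] (h : IsArtinSchreierPair ρ α u v)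
    (hρ : orderOf ρ = 3) (hgen : ∀ g, g ∈ Subgroup.zpowers ρ) : IsGalois J L := by
  have : CharP K 2 := (algebraMap K L).charP (algebraMap K L).injective 2
  refine isGalois_of_sup_adjoin_eq_top h.sup_adjoin_eq_top ?_
  have hsplits (g : Gal(K/J)) (f : Gal(K/J)) :
      (((X ^ 2 - X - C (f α)).map (g : K →+* K)).map (algebraMap K L)).Splits := by
    obtain ⟨w, hw⟩ := h.exists_sq_sub_self_eq hρ (hgen (g * f))
    simpa using splits_X_sq_sub_X_sub_C hw
  rintro x (rfl | rfl)
  · refine ⟨_, separable_X_sq_sub_X_sub_C α, ?_, fun g ↦ hsplits g 1⟩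
    simp [h.sq_sub_self_left, IntermediateField.algebraMap_apply]
  · refine ⟨_, separable_X_sq_sub_X_sub_C (ρ α), ?_, fun g ↦ hsplits g ρ⟩
    simp [h.sq_sub_self_right, IntermediateField.algebraMap_apply]

theorem mul_self_eq_one [IsGalois J L] (h : IsArtinSchreierPair ρ α u v) {σ : Gal(L/J)}
    (hσ : σ ∈ K.fixingSubgroup) : σ * σ = 1 :=
  h.algEquiv_eq_one (mul_mem hσ hσ) (mul_self_apply_of_apply_eq_or_eq_add_one (h.apply_left hσ))
    (mul_self_apply_of_apply_eq_or_eq_add_one (h.apply_right hσ))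

theorem card_fixingSubgroup_le [IsGalois J L] (h : IsArtinSchreierPair ρ α u v) :
    Nat.card K.fixingSubgroup ≤ 4 := by
  let fixes (σ : K.fixingSubgroup) : Prop × Prop := (σ.1 u = u, σ.1 v = v)
  have hinj : Function.Injective fixes := by
    intro σ τ hστ
    have hu : σ.1 u = τ.1 u := apply_eq_apply_of_apply_eq_iff (h.apply_left σ.2)
      (h.apply_left τ.2) (iff_of_eq (congrArg Prod.fst hστ))
    have hv : σ.1 v = τ.1 v := apply_eq_apply_of_apply_eq_iff (h.apply_right σ.2)
      (h.apply_right τ.2) (iff_of_eq (congrArg Prod.snd hστ))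
    refine inv_mul_eq_one.mp (Subtype.ext (h.algEquiv_eq_one (σ⁻¹ * τ).2 ?_ ?_))
    · exact σ.1.symm_apply_eq.mpr hu.symm
    · exact σ.1.symm_apply_eq.mpr hv.symm
  simpa using Nat.card_le_card_of_injective fixes hinj

theorem two_dvd_card_fixingSubgroup [IsGalois J L] (h : IsArtinSchreierPair ρ α u v) :
    2 ∣ Nat.card K.fixingSubgroup := by
  obtain ⟨σ, hσ, hσu⟩ := exists_mem_fixingSubgroup_apply_ne h.left_notMem
  have horder : orderOf σ = 2 := by
    refine orderOf_eq_prime (by rw [sq, h.mul_self_eq_one hσ]) ?_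
    rintro rfl
    exact hσu rfl
  rw [← horder]
  exact Subgroup.orderOf_dvd_natCard _ hσ

theorem card_fixingSubgroup_ne_two [IsGalois J L] (h : IsArtinSchreierPair ρ α u v) :
    Nat.card K.fixingSubgroup ≠ 2 := by
  intro hcard
  obtain ⟨σ, -, hσ⟩ := (Nat.card_eq_two_iff' (1 : K.fixingSubgroup)).mp hcard
  have hmoves {x : L} (hx : x ∉ K) : σ.1 x ≠ x := by
    obtain ⟨τ, hτ, hτx⟩ := exists_mem_fixingSubgroup_apply_ne hx
    rwa [← hσ ⟨τ, hτ⟩ fun hτ1 ↦ hτx (DFunLike.congr_fun (congrArg Subtype.val hτ1) x)]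
  refine hmoves h.add_notMem ?_
  rw [map_add, (h.apply_left σ.2).resolve_left (hmoves h.left_notMem),
    (h.apply_right σ.2).resolve_left (hmoves h.right_notMem), add_add_add_comm,
    CharTwo.add_self_eq_zero, add_zero]

theorem card_fixingSubgroup [FiniteDimensional J L] [IsGalois J L]
    (h : IsArtinSchreierPair ρ α u v) : Nat.card K.fixingSubgroup = 4 := by
  have hpos : 0 < Nat.card K.fixingSubgroup := Nat.card_pos
  have hle := h.card_fixingSubgroup_le
  have hdvd := h.two_dvd_card_fixingSubgroup
  have hne := h.card_fixingSubgroup_ne_two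
  lia

theorem not_fixingSubgroup_le_center [IsGalois J L] [IsGalois J K]
    (h : IsArtinSchreierPair ρ α u v) : ¬ K.fixingSubgroup ≤ Subgroup.center Gal(L/J) := by
  intro hcentral
  obtain ⟨t, rfl⟩ := AlgEquiv.restrictNormalHom_surjective (F := J) (K₁ := K) L ρ
  have htu : t u = v ∨ t u = v + 1 := by
    rw [← sq_sub_self_eq_iff, h.sq_sub_self_right, ← map_pow, ← map_sub, h.sq_sub_self_left]
    exact (AlgEquiv.restrictNormal_commutes t K α).symm
  obtain ⟨σ, hσ, hσuv⟩ := exists_mem_fixingSubgroup_apply_ne h.add_notMem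
  have hcomm : σ (t u) = t (σ u) :=
    (DFunLike.congr_fun (Subgroup.mem_center_iff.mp (hcentral hσ) t) u).symm
  have hδ : σ (t u - v) = t u - v := by rcases htu with htu | htu <;> simp [htu]
  have hε : t (σ u - u) = σ u - u := by rcases h.apply_left hσ with hσu | hσu <;> simp [hσu]
  refine hσuv ?_
  simp only [map_sub, map_add, hcomm] at hδ hε ⊢
  linear_combination hε - hδ + (σ u - u) * (CharTwo.two_eq_zero : (2 : L) = 0)

theorem nonempty_mulEquiv_alternatingGroup [FiniteDimensional J L] [IsGalois J L] [IsGalois J K]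
    (h : IsArtinSchreierPair ρ α u v) (hK : finrank J K = 3) :
    Nonempty (Gal(L/J) ≃* alternatingGroup (Fin 4)) := by
  have hcard : Nat.card Gal(L/J) = 12 := by
    rw [IsGalois.card_aut_eq_finrank, ← finrank_mul_finrank J K L, hK,
      ← IsGalois.card_fixingSubgroup_eq_finrank, h.card_fixingSubgroup]
  exact nonempty_mulEquiv_alternatingGroup_of_not_le_center hcard h.card_fixingSubgroup
    h.not_fixingSubgroup_le_center

end IsArtinSchreierPair

theorem exists_isArtinSchreierPair_restrictNormalHom [CharP L 2] [IsGalois J L]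
    {K : IntermediateField J L} [IsGalois J K] {t : Gal(L/J)} {u : L}
    (hu : ∀ σ ∈ K.fixingSubgroup, σ u = u ∨ σ u = u + 1) (hK : K ≠ ⊤)
    (htrace : u + t u + t (t u) = 0)
    (hfaithful : ∀ σ ∈ K.fixingSubgroup, σ u = u → σ (t u) = t u → σ = 1) :
    ∃ α : K, IsArtinSchreierPair (AlgEquiv.restrictNormalHom K t) α u (t u) := by
  have hrestrict (x : K) : (AlgEquiv.restrictNormalHom K t x : L) = t x :=
    AlgEquiv.restrictNormal_commutes t K x
  have hα : u ^ 2 - u ∈ K := by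
    rw [← InfiniteGalois.fixedField_fixingSubgroup K, mem_fixedField_iff]
    intro σ hσ
    rw [map_sub, map_pow, sq_sub_self_eq_iff]
    exact hu σ hσ
  have hsup : K ⊔ adjoin J {u, t u} = ⊤ := sup_adjoin_eq_top_iff.mpr fun σ hσ hfix ↦
    hfaithful σ hσ (hfix u (by simp)) (hfix (t u) (by simp))
  have huK : u ∉ K := fun hmem ↦ by
    have htmem : t u ∈ K := hrestrict ⟨u, hmem⟩ ▸ SetLike.coe_mem _
    rw [sup_eq_left.mpr (adjoin_le_iff.mpr (Set.pair_subset hmem htmem))] at hsup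
    exact hK hsup
  refine ⟨⟨u ^ 2 - u, hα⟩, hsup, rfl, fun ξ hξ ↦ huK ?_, Subtype.ext ?_, ?_⟩
  · rcases sq_sub_self_eq_iff.mp (congrArg Subtype.val hξ : u ^ 2 - u = (ξ : L) ^ 2 - ξ) with h | h
    · exact h ▸ ξ.2
    · exact h ▸ add_mem ξ.2 (one_mem K)
  · simp only [AddMemClass.coe_add, hrestrict, ZeroMemClass.coe_zero, map_sub, map_pow]
    rw [← sq_sub_self_add, ← sq_sub_self_add, htrace]
    simp
  · rw [hrestrict, map_sub, map_pow]

end ArtinSchreier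

section AlternatingGaloisGroup

variable {J L : Type*} [Field J] [Field L] [Algebra J L]

theorem add_apply_eq_or_of_mem_kleinFour {R : Type*} [CommRing R] [CharP R 2] {w : Fin 4 → R}
    (hw : ∑ i, w i = 1) {π : alternatingGroup (Fin 4)}
    (hπ : π ∈ alternatingGroup.kleinFour (Fin 4)) :
    w ((π : Equiv.Perm (Fin 4)) 1) + w ((π : Equiv.Perm (Fin 4)) 2) = w 1 + w 2 ∨
      w ((π : Equiv.Perm (Fin 4)) 1) + w ((π : Equiv.Perm (Fin 4)) 2) = w 1 + w 2 + 1 := by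
  rw [Fin.sum_univ_four] at hw
  have hcompl : w 0 + w 3 = w 1 + w 2 + 1 := by
    linear_combination hw - (w 1 + w 2) * (CharTwo.two_eq_zero : (2 : R) = 0)
  rcases coe_eq_of_mem_kleinFour_fin_four hπ with h | h | h | h <;> rw [h]
  · exact .inl rfl
  · exact .inr hcompl
  · exact .inr ((add_comm _ _).trans hcompl)
  · exact .inl (add_comm _ _)

theorem eq_one_of_mem_kleinFour {R : Type*} [CommRing R] [Nontrivial R] [CharP R 2] {w : Fin 4 → R}
    (hw : ∑ i, w i = 1) {π : alternatingGroup (Fin 4)}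
    (hπ : π ∈ alternatingGroup.kleinFour (Fin 4))
    (h₁₂ : w ((π : Equiv.Perm (Fin 4)) 1) + w ((π : Equiv.Perm (Fin 4)) 2) = w 1 + w 2)
    (h₂₃ : w ((π : Equiv.Perm (Fin 4)) 2) + w ((π : Equiv.Perm (Fin 4)) 3) = w 2 + w 3) :
    π = 1 := by
  rw [Fin.sum_univ_four] at hw
  have hcontra {a b c d : R} (hsum : a + b + (c + d) = 1) (h : a + b = c + d) : False :=
    one_ne_zero (hsum.symm.trans (h ▸ CharTwo.add_self_eq_zero _))
  rcases coe_eq_of_mem_kleinFour_fin_four hπ with h | h | h | h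
  · exact Subtype.ext h
  · replace h₁₂ : w 0 + w 3 = w 1 + w 2 := by rwa [h] at h₁₂
    exact (hcontra (by linear_combination hw) h₁₂).elim
  · replace h₁₂ : w 3 + w 0 = w 1 + w 2 := by rwa [h] at h₁₂
    exact (hcontra (by linear_combination hw) h₁₂).elim
  · replace h₂₃ : w 1 + w 0 = w 2 + w 3 := by rwa [h] at h₂₃
    exact (hcontra (by linear_combination hw) h₂₃).elim

theorem exists_isGalois_mem_fixingSubgroup_iff_mem_kleinFour [FiniteDimensional J L]
    [IsGalois J L] (e : Gal(L/J) ≃* alternatingGroup (Fin 4)) :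
    ∃ K : IntermediateField J L, IsGalois J K ∧ finrank J K = 3 ∧
      ∀ σ, σ ∈ K.fixingSubgroup ↔ e σ ∈ alternatingGroup.kleinFour (Fin 4) := by
  let V := (alternatingGroup.kleinFour (Fin 4)).comap e.toMonoidHom
  have : (alternatingGroup.kleinFour (Fin 4)).Normal :=
    alternatingGroup.normal_kleinFour (Nat.card_fin 4)
  have hfix : (fixedField V).fixingSubgroup = V := fixingSubgroup_fixedField V
  refine ⟨fixedField V, inferInstance, ?_, fun σ ↦ by rw [hfix]; rfl⟩
  rw [finrank_eq_fixingSubgroup_index, hfix, Subgroup.index_comap_of_surjective _ e.surjective,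
    index_kleinFour_fin_four]

theorem exists_isArtinSchreierPair [CharP L 2] [FiniteDimensional J L] [IsGalois J L]
    (e : Gal(L/J) ≃* alternatingGroup (Fin 4)) :
    ∃ (K : IntermediateField J L) (ρ : Gal(K/J)), IsGalois J K ∧ finrank J K = 3 ∧
      (∀ g, g ∈ Subgroup.zpowers ρ) ∧ ∃ u v α, IsArtinSchreierPair ρ α u v := by
  obtain ⟨K, _, hfinrank, hfix⟩ := exists_isGalois_mem_fixingSubgroup_iff_mem_kleinFour e
  obtain ⟨w, hequivariant, hsum⟩ := exists_equivariant_sum_eq_one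
    ((alternatingGroup (Fin 4)).subtype.comp e.toMonoidHom)
  have hw (σ i) : σ (w i) = w ((e σ : Equiv.Perm (Fin 4)) i) := hequivariant σ i
  let threeCycle : alternatingGroup (Fin 4) :=
    ⟨.swap 1 2 * .swap 2 3, Equiv.Perm.mem_alternatingGroup.mpr (by decide)⟩
  let t : Gal(L/J) := e.symm threeCycle
  have ht : t ∉ K.fixingSubgroup := by
    rw [hfix, mem_kleinFour_fin_four_iff, e.apply_symm_apply]
    decide
  have ht₁ : t (w 1) = w 2 := by rw [hw, e.apply_symm_apply]; rfl
  have ht₂ : t (w 2) = w 3 := by rw [hw, e.apply_symm_apply]; rfl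
  have ht₃ : t (w 3) = w 1 := by rw [hw, e.apply_symm_apply]; rfl
  have hK : K ≠ ⊤ := by
    rintro rfl
    rw [finrank_top', ← IsGalois.card_aut_eq_finrank, Nat.card_congr e.toEquiv,
      alternatingGroup.card_of_card_eq_four (Nat.card_fin 4)] at hfinrank
    lia
  have hu (σ) (hσ : σ ∈ K.fixingSubgroup) :
      σ (w 1 + w 2) = w 1 + w 2 ∨ σ (w 1 + w 2) = w 1 + w 2 + 1 := by
    rw [map_add, hw, hw]
    exact add_apply_eq_or_of_mem_kleinFour hsum ((hfix σ).mp hσ)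
  have htrace : (w 1 + w 2) + t (w 1 + w 2) + t (t (w 1 + w 2)) = 0 := by
    simp only [map_add, ht₁, ht₂, ht₃]
    linear_combination (w 1 + w 2 + w 3) * (CharTwo.two_eq_zero : (2 : L) = 0)
  have hfaithful (σ) (hσ : σ ∈ K.fixingSubgroup) (h₁₂ : σ (w 1 + w 2) = w 1 + w 2)
      (h₂₃ : σ (t (w 1 + w 2)) = t (w 1 + w 2)) : σ = 1 := by
    simp only [map_add, ht₁, ht₂] at h₁₂ h₂₃
    rw [hw, hw] at h₁₂ h₂₃
    exact e.map_eq_one_iff.mp (eq_one_of_mem_kleinFour hsum ((hfix σ).mp hσ) h₁₂ h₂₃)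
  obtain ⟨α, hα⟩ := exists_isArtinSchreierPair_restrictNormalHom hu hK htrace hfaithful
  exact ⟨K, _, inferInstance, hfinrank,
    mem_zpowers_restrictNormalHom_of_finrank_prime (hfinrank ▸ Nat.prime_three) ht, _, _, α, hα⟩

end AlternatingGaloisGroup

/-- **Theorem (Galois A₄ extensions in characteristic 2).**
Let `L/J` be an extension of fields of characteristic `2` where `J` contains a primitive
cube root of unity.  Then `L/J` is Galois with Galois group isomorphic to the alternating
group `A₄` if and only if conditions (1) and (2) of the statement hold. -/
theorem stmt_0 (J L : Type) [Field J] [Field L] [CharP J 2] [CharP L 2] [Algebra J L]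
    (hζJ : ∃ ζ₀ : J, IsPrimitiveRoot ζ₀ 3) :
    (IsGalois J L ∧ Nonempty ((L ≃ₐ[J] L) ≃* ↥(alternatingGroup (Fin 4)))) ↔
    ∃ (K : IntermediateField J L) (ρ : ↥K ≃ₐ[J] ↥K) (ζ : J) (c : L) (hcK : c ∈ K),
      -- (1)(a): K = J(c) with c ∈ K \ J and c³ ∈ J
      c ∉ (algebraMap J L).range ∧
      c ^ 3 ∈ (algebraMap J L).range ∧
      IntermediateField.adjoin J {c} = K ∧
      -- (1)(b): K/J Galois with cyclic Galois group of order 3 generated by ρ, ρ c = ζ c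
      IsGalois J ↥K ∧
      orderOf ρ = 3 ∧
      (∀ g : ↥K ≃ₐ[J] ↥K, g ∈ Subgroup.zpowers ρ) ∧
      IsPrimitiveRoot ζ 3 ∧
      ρ ⟨c, hcK⟩ = algebraMap J ↥K ζ * ⟨c, hcK⟩ ∧
      -- (2): L = K(u, v), u² - u = α ∈ K with the stated properties
      ∃ (u v : L) (α : ↥K),
        K ⊔ IntermediateField.adjoin J {u, v} = ⊤ ∧
        u ^ 2 - u = (α : L) ∧
        (∀ ξ : ↥K, α ≠ ξ ^ 2 - ξ) ∧
        α + ρ α + ρ (ρ α) = 0 ∧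
        v ^ 2 - v = ((ρ α : ↥K) : L) := by
  constructor
  · rintro ⟨_, ⟨e⟩⟩
    obtain ⟨ζ₀, hζ₀⟩ := hζJ
    have : Finite Gal(L/J) := .of_equiv _ e.symm.toEquiv
    have : FiniteDimensional J L := IsGalois.finiteDimensional_of_finite J L
    obtain ⟨K, ρ, _, hK, hgen, u, v, α, hpair⟩ := exists_isArtinSchreierPair e
    obtain ⟨ζ, c, hζ, hρc, ⟨a, ha⟩, hc⟩ := exists_isPrimitiveRoot_apply_eq_mul hK hζ₀ hgen
    have hcK : J⟮(c : L)⟯ = K := by rw [← lift_adjoin_simple, hc, lift_top]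
    have hρ : orderOf ρ = 3 := by
      rw [orderOf_eq_card_of_forall_mem_zpowers hgen, IsGalois.card_aut_eq_finrank, hK]
    exact ⟨K, ρ, ζ, c, c.2,
      notMem_range_algebraMap_of_adjoin_eq (by lia) hcK, ⟨a, congrArg Subtype.val ha⟩, hcK,
      inferInstance, hρ, hgen, hζ, hρc, u, v, α, hpair.1, hpair.2, hpair.3, hpair.4, hpair.5⟩
  · rintro ⟨K, ρ, -, -, -, -, -, -, _, hρ, hgen, -, -, u, v, α, htop, hu, hα, htrace, hv⟩
    have hcard : Nat.card Gal(K/J) = 3 := by rw [← orderOf_eq_card_of_forall_mem_zpowers hgen, hρ]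
    have : Finite Gal(K/J) := Nat.finite_of_card_ne_zero (by lia)
    have : FiniteDimensional J K := IsGalois.finiteDimensional_of_finite J K
    have hpair : IsArtinSchreierPair ρ α u v := ⟨htop, hu, hα, htrace, hv⟩
    have := hpair.isGalois hρ hgen
    have := hpair.finiteDimensional
    have hK : finrank J K = 3 := by rw [← IsGalois.card_aut_eq_finrank, hcard]
    exact ⟨inferInstance, hpair.nonempty_mulEquiv_alternatingGroup hK⟩
end

section
/- Let k be an algebraically closed field of characteristic 2, let K = k(x) be the rational function field in one variable over k, and let ρ be a k-algebra automorphism of K of order 3 with fixed field J. Then there exist an element s ∈ K and a primitive cube root of unity ζ ∈ k such that K = k(s), ρ(s) = ζs, and J = k(s³). -/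
/-! An automorphism of `k(x)` sends `x` to a Möbius transform of `x`. Moving a fixed point of this
transform to infinity makes the automorphism affine in a suitable generator `t`, say `t ↦ a t + b`.
If `a = 1`, then `n` iterations add `n b`, so finite order prime to the characteristic forces
`b = 0`; otherwise `t - b / (1 - a)` is multiplied by `a`. Thus some generator `s` is an
eigenvector, and its eigenvalue `ζ` has the order `n` of the automorphism. Finally `k(s ^ n)` is
contained in the fixed field, and they coincide because `k(s)` has degree `n` over the fixed field
by Artin's theorem and degree at most `n` over `k(s ^ n)`. -/

open IntermediateField

section SimpleExtension

variable {k K : Type*} [Field k] [Field K] [Algebra k K]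

theorem adjoin_simple_inv (t : K) : k⟮t⁻¹⟯ = k⟮t⟯ := by
  refine le_antisymm (adjoin_simple_le_iff.mpr (inv_mem (mem_adjoin_simple_self k t)))
    (adjoin_simple_le_iff.mpr ?_)
  simpa only [inv_inv] using inv_mem (mem_adjoin_simple_self k t⁻¹)

theorem adjoin_simple_sub_algebraMap (t : K) (c : k) : k⟮t - algebraMap k K c⟯ = k⟮t⟯ := by
  have hc (L : IntermediateField k K) : algebraMap k K c ∈ L := L.algebraMap_mem c
  refine le_antisymm (adjoin_simple_le_iff.mpr (sub_mem (mem_adjoin_simple_self k t) (hc _)))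
    (adjoin_simple_le_iff.mpr ?_)
  simpa only [sub_add_cancel] using
    add_mem (mem_adjoin_simple_self k (t - algebraMap k K c)) (hc _)

theorem adjoin_simple_apply_eq_top (ρ : K ≃ₐ[k] K) {t : K} (ht : k⟮t⟯ = ⊤) : k⟮ρ t⟯ = ⊤ := by
  have hmap : k⟮t⟯.map ρ.toAlgHom = k⟮ρ t⟯ := by
    rw [adjoin_map, Set.image_singleton]
    rfl
  rw [← hmap, ht, ← AlgHom.fieldRange_eq_map]
  exact AlgEquiv.fieldRange_eq_top ρ

theorem mem_fixedField_zpowers_iff {ρ : K ≃ₐ[k] K} {x : K} :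
    x ∈ fixedField (Subgroup.zpowers ρ) ↔ ρ x = x := by
  rw [mem_fixedField_iff]
  refine ⟨fun h ↦ h ρ (Subgroup.mem_zpowers ρ), fun h f hf ↦ ?_⟩
  exact (Subgroup.zpowers_le (H := MulAction.stabilizer _ x)).mpr h hf

theorem algEquiv_eq_one_iff_apply_generator {ρ : K ≃ₐ[k] K} {t : K} (ht : k⟮t⟯ = ⊤) :
    ρ = 1 ↔ ρ t = t := by
  refine ⟨fun h ↦ by rw [h, AlgEquiv.one_apply], fun h ↦ AlgEquiv.ext fun x ↦ ?_⟩
  have hle : k⟮t⟯ ≤ fixedField (Subgroup.zpowers ρ) :=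
    adjoin_simple_le_iff.mpr (mem_fixedField_zpowers_iff.mpr h)
  exact mem_fixedField_zpowers_iff.mp (hle (ht ▸ mem_top))

theorem finiteDimensional_over_adjoin_pow {s : K} (hs : k⟮s⟯ = ⊤) {n : ℕ} (hn : 0 < n) :
    FiniteDimensional k⟮s ^ n⟯ K := by
  have hint : IsIntegral k⟮s ^ n⟯ s :=
    .of_pow hn (isIntegral_algebraMap (x := AdjoinSimple.gen k (s ^ n)))
  have := adjoin.finiteDimensional hint
  rw [adjoin_eq_top_of_adjoin_eq_top k hs] at this
  exact topEquiv.toLinearEquiv.finiteDimensional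

theorem finrank_over_adjoin_pow_le {s : K} (hs : k⟮s⟯ = ⊤) {n : ℕ} (hn : 0 < n) :
    Module.finrank k⟮s ^ n⟯ K ≤ n := by
  have := finiteDimensional_over_adjoin_pow hs hn
  let p : Polynomial k⟮s ^ n⟯ := .X ^ n - .C (AdjoinSimple.gen k (s ^ n))
  have hp : Polynomial.aeval s p = 0 := by simp [p]
  calc Module.finrank k⟮s ^ n⟯ K
      = (minpoly k⟮s ^ n⟯ s).natDegree := by
        rw [← adjoin.finrank (.of_finite _ s), adjoin_eq_top_of_adjoin_eq_top k hs, finrank_top']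
    _ ≤ p.natDegree :=
        Polynomial.natDegree_le_of_dvd (minpoly.dvd _ s hp) (Polynomial.X_pow_sub_C_ne_zero hn _)
    _ = n := Polynomial.natDegree_X_pow_sub_C

theorem finrank_over_fixedField_zpowers {ρ : K ≃ₐ[k] K} (hρ : IsOfFinOrder ρ) :
    Module.finrank (fixedField (Subgroup.zpowers ρ)) K = orderOf ρ := by
  have : Finite (Subgroup.zpowers ρ) := hρ.finite_zpowers
  have := Fintype.ofFinite (Subgroup.zpowers ρ)
  rw [← Nat.card_zpowers, Nat.card_eq_fintype_card]
  exact FixedPoints.finrank_eq_card (Subgroup.zpowers ρ) K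

end SimpleExtension

section Automorphism

variable {k K : Type*} [Field k] [Field K] [Algebra k K] {ρ : K ≃ₐ[k] K}

theorem pow_apply_eq_pow_mul {s : K} {ζ : k} (hρs : ρ s = algebraMap k K ζ * s) (m : ℕ) :
    (ρ ^ m) s = algebraMap k K (ζ ^ m) * s := by
  induction m with
  | zero => simp
  | succ m ih =>
    rw [pow_succ', AlgEquiv.mul_apply, ih, map_mul, AlgEquiv.commutes, hρs, pow_succ, map_mul,
      mul_assoc]

theorem orderOf_eq_orderOf_eigenvalue {s : K} {ζ : k} (hs : k⟮s⟯ = ⊤) (hs0 : s ≠ 0)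
    (hρs : ρ s = algebraMap k K ζ * s) : orderOf ρ = orderOf ζ := by
  refine orderOf_eq_orderOf_iff.mpr fun m ↦ ?_
  rw [algEquiv_eq_one_iff_apply_generator hs, pow_apply_eq_pow_mul hρs, mul_eq_right₀ hs0,
    map_eq_one_iff _ (algebraMap k K).injective]

theorem fixedField_zpowers_eq_adjoin_pow_orderOf {s : K} {ζ : k} (hs : k⟮s⟯ = ⊤) (hs0 : s ≠ 0)
    (hρs : ρ s = algebraMap k K ζ * s) (hρ : IsOfFinOrder ρ) :
    fixedField (Subgroup.zpowers ρ) = k⟮s ^ orderOf ρ⟯ := by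
  have hζ : ζ ^ orderOf ρ = 1 :=
    orderOf_eq_orderOf_eigenvalue hs hs0 hρs ▸ pow_orderOf_eq_one ζ
  have hle : k⟮s ^ orderOf ρ⟯ ≤ fixedField (Subgroup.zpowers ρ) := by
    rw [adjoin_simple_le_iff, mem_fixedField_zpowers_iff, map_pow, hρs, mul_pow, ← map_pow, hζ,
      map_one, one_mul]
  have := finiteDimensional_over_adjoin_pow hs hρ.orderOf_pos
  refine (eq_of_le_of_finrank_le' hle ?_).symm
  rw [finrank_over_fixedField_zpowers hρ]
  exact finrank_over_adjoin_pow_le hs hρ.orderOf_pos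

theorem pow_apply_eq_add_mul {t : K} {b : k} (hρt : ρ t = t + algebraMap k K b) (m : ℕ) :
    (ρ ^ m) t = t + algebraMap k K (m * b) := by
  induction m with
  | zero => simp
  | succ m ih =>
    rw [pow_succ', AlgEquiv.mul_apply, ih, map_add, AlgEquiv.commutes, hρt, add_assoc, ← map_add,
      Nat.cast_succ]
    congr 2
    ring

theorem eq_zero_of_apply_eq_add {t : K} {b : k} (hord : (orderOf ρ : k) ≠ 0)
    (hρt : ρ t = t + algebraMap k K b) : b = 0 := by
  have h := pow_apply_eq_add_mul hρt (orderOf ρ)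
  rw [pow_orderOf_eq_one, AlgEquiv.one_apply, left_eq_add, map_eq_zero] at h
  exact (mul_eq_zero.mp h).resolve_left hord

theorem exists_generator_apply_eq_mul_of_affine {t : K} {a b : k} (hord : (orderOf ρ : k) ≠ 0)
    (ht : k⟮t⟯ = ⊤) (hρt : ρ t = algebraMap k K a * t + algebraMap k K b) :
    ∃ (s : K) (ζ : k), k⟮s⟯ = ⊤ ∧ ρ s = algebraMap k K ζ * s := by
  by_cases ha : a = 1
  · have hb : b = 0 := eq_zero_of_apply_eq_add (t := t) hord (by simpa [ha] using hρt)
    exact ⟨t, a, ht, by simpa [hb] using hρt⟩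
  · have hb : b - b / (1 - a) = -(a * (b / (1 - a))) := by
      have : 1 - a ≠ 0 := sub_ne_zero.mpr (Ne.symm ha)
      field_simp
      ring
    refine ⟨t - algebraMap k K (b / (1 - a)), a, by rw [adjoin_simple_sub_algebraMap, ht], ?_⟩
    rw [map_sub, AlgEquiv.commutes, hρt, add_sub_assoc, ← map_sub, hb, map_neg, map_mul]
    ring

/-- `h` makes `ρ` a Möbius transformation fixing `0`, which is `∞` in the coordinate `u⁻¹`. -/
theorem apply_inv_eq_affine {u : K} {c d e : k} (hu : u ≠ 0)
    (hden : algebraMap k K c * u + algebraMap k K d ≠ 0)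
    (h : ρ u * (algebraMap k K c * u + algebraMap k K d) = algebraMap k K e * u) :
    ρ u⁻¹ = algebraMap k K (d / e) * u⁻¹ + algebraMap k K (c / e) := by
  have hρu : ρ u ≠ 0 := (map_ne_zero ρ).mpr hu
  have he : algebraMap k K e ≠ 0 := left_ne_zero_of_mul (h ▸ mul_ne_zero hρu hden)
  rw [map_inv₀, map_div₀, map_div₀, inv_eq_iff_eq_inv, eq_div_of_mul_eq hden h]
  field_simp
  ring

end Automorphism

section RationalFunctionField

variable {k : Type*} [Field k]

theorem ratFunc_generator_ne_zero {s : RatFunc k} (hs : k⟮s⟯ = ⊤) : s ≠ 0 := by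
  rintro rfl
  have h := RatFunc.finrank_eq_max_natDegree (0 : RatFunc k)
  rw [hs, IntermediateField.finrank_top] at h
  simp at h

theorem ratFunc_generator_mul_linear_eq_linear {f : RatFunc k} (hf : k⟮f⟯ = ⊤) :
    ∃ a b c d : k, RatFunc.C c * RatFunc.X + RatFunc.C d ≠ 0 ∧
      f * (RatFunc.C c * RatFunc.X + RatFunc.C d) = RatFunc.C a * RatFunc.X + RatFunc.C b := by
  have hdeg : 1 = max f.num.natDegree f.denom.natDegree := by
    rw [← RatFunc.finrank_eq_max_natDegree, hf, IntermediateField.finrank_top]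
  obtain ⟨a, b, hnum⟩ :=
    Polynomial.exists_eq_X_add_C_of_natDegree_le_one (hdeg ▸ le_max_left _ _ : f.num.natDegree ≤ 1)
  obtain ⟨c, d, hdenom⟩ := Polynomial.exists_eq_X_add_C_of_natDegree_le_one
    (hdeg ▸ le_max_right _ _ : f.denom.natDegree ≤ 1)
  have hne := RatFunc.algebraMap_ne_zero f.denom_ne_zero
  have hmul := (div_eq_iff hne).mp f.num_div_denom
  rw [hnum, hdenom] at hmul
  rw [hdenom] at hne
  exact ⟨a, b, c, d, by simpa using hne, by simpa using hmul.symm⟩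

theorem exists_moebius_fixed_point [IsAlgClosed k] (a b d : k) {c : k} (hc : c ≠ 0) :
    ∃ β : k, β * (c * β + d) = a * β + b := by
  obtain ⟨β, hβ⟩ := IsAlgClosed.exists_root
    (Polynomial.C c * Polynomial.X ^ 2 + Polynomial.C (d - a) * Polynomial.X + Polynomial.C (-b))
    (by rw [Polynomial.degree_quadratic hc]; decide)
  simp only [Polynomial.IsRoot, Polynomial.eval_add, Polynomial.eval_mul, Polynomial.eval_C,
    Polynomial.eval_pow, Polynomial.eval_X] at hβ
  exact ⟨β, by linear_combination hβ⟩

theorem exists_generator_apply_eq_affine [IsAlgClosed k] (ρ : RatFunc k ≃ₐ[k] RatFunc k) :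
    ∃ (t : RatFunc k) (a b : k), k⟮t⟯ = ⊤ ∧ ρ t = RatFunc.C a * t + RatFunc.C b := by
  obtain ⟨a, b, c, d, hden, h⟩ :=
    ratFunc_generator_mul_linear_eq_linear (adjoin_simple_apply_eq_top ρ RatFunc.adjoin_X)
  by_cases hc : c = 0
  · simp only [hc, map_zero, zero_mul, zero_add] at hden h
    refine ⟨RatFunc.X, a / d, b / d, RatFunc.adjoin_X, ?_⟩
    rw [eq_div_of_mul_eq hden h, map_div₀, map_div₀]
    ring
  · obtain ⟨β, hβ⟩ := exists_moebius_fixed_point a b d hc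
    set u : RatFunc k := RatFunc.X - RatFunc.C β with hu
    have hu_top : k⟮u⟯ = ⊤ := (adjoin_simple_sub_algebraMap _ β).trans RatFunc.adjoin_X
    have hden_u : RatFunc.C c * RatFunc.X + RatFunc.C d =
        RatFunc.C c * u + RatFunc.C (c * β + d) := by
      rw [hu, map_add, map_mul]
      ring
    have hmul : ρ u * (RatFunc.C c * u + RatFunc.C (c * β + d)) = RatFunc.C (a - c * β) * u := by
      have hρu : ρ u = ρ RatFunc.X - RatFunc.C β := by
        rw [hu, map_sub, ← RatFunc.algebraMap_eq_C, AlgEquiv.commutes]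
      have hβ' := congrArg RatFunc.C hβ
      simp only [map_add, map_mul] at hβ'
      rw [hρu, ← hden_u, sub_mul, h, hu, map_sub, map_mul]
      linear_combination -hβ'
    exact ⟨u⁻¹, _, _, (adjoin_simple_inv u).trans hu_top,
      apply_inv_eq_affine (ratFunc_generator_ne_zero hu_top) (hden_u ▸ hden) hmul⟩

end RationalFunctionField

theorem stmt_1_general {k : Type*} [Field k] [IsAlgClosed k] (ρ : RatFunc k ≃ₐ[k] RatFunc k)
    {n : ℕ} (hn : (n : k) ≠ 0) (hρ : orderOf ρ = n) :
    ∃ (s : RatFunc k) (ζ : k),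
      IsPrimitiveRoot ζ n ∧
      k⟮s⟯ = ⊤ ∧
      ρ s = RatFunc.C ζ * s ∧
      ∀ x : RatFunc k, ρ x = x ↔ x ∈ k⟮s ^ n⟯ := by
  subst hρ
  obtain ⟨t, a, b, ht, hρt⟩ := exists_generator_apply_eq_affine ρ
  obtain ⟨s, ζ, hs, hρs⟩ := exists_generator_apply_eq_mul_of_affine hn ht hρt
  have hs0 := ratFunc_generator_ne_zero hs
  have hfin : IsOfFinOrder ρ := orderOf_ne_zero_iff.mp fun h ↦ hn (by rw [h, Nat.cast_zero])
  refine ⟨s, ζ, ?_, hs, hρs, fun x ↦ ?_⟩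
  · rw [orderOf_eq_orderOf_eigenvalue hs hs0 hρs]
    exact IsPrimitiveRoot.orderOf ζ
  · rw [← fixedField_zpowers_eq_adjoin_pow_orderOf hs hs0 hρs hfin, mem_fixedField_zpowers_iff]

/-- **Lemma.** If `k` is an algebraically closed field of characteristic 2, `K = k(x)` the
rational function field, and `ρ` a `k`-algebra automorphism of `K` of order 3 with fixed
field `J`, then there are `s ∈ K` and a primitive cube root of unity `ζ ∈ k` with
`K = k(s)`, `ρ s = ζ s` and `J = k(s³)`. -/
theorem stmt_1 (k : Type) [Field k] [IsAlgClosed k] [CharP k 2]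
    (ρ : RatFunc k ≃ₐ[k] RatFunc k) (hρ : orderOf ρ = 3) :
    ∃ (s : RatFunc k) (ζ : k),
      IsPrimitiveRoot ζ 3 ∧
      IntermediateField.adjoin k {s} = ⊤ ∧
      ρ s = RatFunc.C ζ * s ∧
      ∀ x : RatFunc k, ρ x = x ↔ x ∈ IntermediateField.adjoin k {s ^ 3} := by
  have h3 : ((3 : ℕ) : k) ≠ 0 := (CharP.cast_eq_zero_iff k 2 3).not.mpr (by decide)
  exact stmt_1_general ρ h3 hρ
end

section
/- Let k be a field of characteristic 2 containing a primitive cube root of unity ζ, let K = k(s) be the rational function field over k and J = k(s³) ⊆ K. Let ψ ∈ k \ {0} and let e ≥ 1 be an integer. Then Tr_{K/J}((s − ψ)^{−e}) = F(s³)/(s³ − ψ³)^e for some polynomial F ∈ k[T] with F(ψ³) = ψ^{2e} ≠ 0; in particular, viewed as a rational function of the variable t = s³, the trace Tr_{K/J}((s − ψ)^{−e}) has a pole of order exactly e at t = ψ³. -/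
/-!
Put `t = Xⁿ` and `h = (Xⁿ - ψⁿ) / (X - ψ)`, a polynomial over `k`. Then
`(X - ψ)⁻ᵉ = hᵉ / (t - ψⁿ)ᵉ`, so only the trace of the polynomial `hᵉ` matters. Multiplication by
`Xᵐ` permutes the basis `1, X, …, Xⁿ⁻¹` of `k(X)` over `k(t)` up to scalars, with no fixed point
when `n ∤ m`; hence the trace keeps the monomials `X^(nq)` and multiplies them by `n`.
To evaluate the result at `t = ψⁿ`, work modulo `Xⁿ - ψⁿ`: there `X * h = ψ * h`, so
`hᵉ = h(ψ)ᵉ⁻¹ * h`. Only the constant term `ψⁿ⁻¹` of `h` contributes to the trace of `h`, and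
`h(ψ) = n * ψⁿ⁻¹`, so the value is `(n * ψⁿ⁻¹)ᵉ`; for `n = 3` in characteristic 2 it is `ψ²ᵉ`.
-/

open Polynomial

section Cofactor

variable {R : Type*} [CommRing R]

/-- The cofactor of `X - a` in `Xⁿ - aⁿ`, as the explicit sum `∑ aⁿ⁻¹⁻ⁱ Xⁱ` so that it makes sense
over every commutative ring. -/
noncomputable def powSubPowCofactor (n : ℕ) (a : R) : R[X] :=
  ∑ i ∈ Finset.range n, X ^ i * C a ^ (n - 1 - i)

theorem powSubPowCofactor_mul_X_sub_C (n : ℕ) (a : R) :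
    powSubPowCofactor n a * (X - C a) = X ^ n - C (a ^ n) := by
  rw [powSubPowCofactor, (Commute.all X (C a)).geom_sum₂_mul, C_pow]

theorem eval_powSubPowCofactor_self (n : ℕ) (a : R) :
    (powSubPowCofactor n a).eval a = n * a ^ (n - 1) := by
  simp only [powSubPowCofactor, eval_finsetSum, eval_mul, eval_pow, eval_X, eval_C]
  exact geom_sum₂_self a n

theorem coeff_powSubPowCofactor (n : ℕ) (a : R) (i : ℕ) :
    (powSubPowCofactor n a).coeff i = if i < n then a ^ (n - 1 - i) else 0 := by
  simp only [powSubPowCofactor, finsetSum_coeff, ← C_pow, coeff_mul_C, coeff_X_pow, ite_mul,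
    one_mul, zero_mul, Finset.sum_ite_eq, Finset.mem_range]

theorem contract_powSubPowCofactor {n : ℕ} (hn : n ≠ 0) (a : R) :
    contract n (powSubPowCofactor n a) = C (a ^ (n - 1)) := by
  ext i
  rw [coeff_contract hn, coeff_powSubPowCofactor, coeff_C]
  rcases Nat.eq_zero_or_pos i with rfl | hi
  · simp [Nat.pos_of_ne_zero hn]
  · simp [hi.ne', Nat.le_mul_of_pos_left n hi]

theorem X_pow_sub_C_dvd_powSubPowCofactor_pow_succ_sub (n : ℕ) (a : R) (e : ℕ) :
    X ^ n - C (a ^ n) ∣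
      powSubPowCofactor n a ^ (e + 1) - C ((n * a ^ (n - 1)) ^ e) * powSubPowCofactor n a := by
  have h : X - C a ∣ powSubPowCofactor n a ^ e - C ((n * a ^ (n - 1)) ^ e) := by
    simpa only [eval_pow, eval_powSubPowCofactor_self] using
      X_sub_C_dvd_sub_C_eval (p := powSubPowCofactor n a ^ e) (a := a)
  rw [← powSubPowCofactor_mul_X_sub_C, pow_succ', mul_comm (C _), ← mul_sub]
  exact mul_dvd_mul_left _ h

theorem eval_contract_eq_of_X_pow_sub_C_dvd {n : ℕ} (hn : n ≠ 0) {b : R} {p q : R[X]}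
    (h : X ^ n - C b ∣ p - q) : (contract n p).eval b = (contract n q).eval b := by
  obtain ⟨r, hr⟩ := h
  have hp : p = q + r * expand R n (X - C b) := by
    rw [map_sub, expand_X, expand_C, mul_comm, ← hr, add_sub_cancel]
  rw [hp, contract_add hn, contract_mul_expand hn, eval_add, eval_mul, eval_sub, eval_X, eval_C,
    sub_self, mul_zero, add_zero]

theorem natCast_mul_eval_contract_powSubPowCofactor_pow {n e : ℕ} (hn : n ≠ 0) (he : e ≠ 0)
    (a : R) :
    n * (contract n (powSubPowCofactor n a ^ e)).eval (a ^ n) = (n * a ^ (n - 1)) ^ e := by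
  obtain ⟨e, rfl⟩ := Nat.exists_eq_succ_of_ne_zero he
  have contract_C_mul (c : R) (p : R[X]) : contract n (C c * p) = C c * contract n p := by
    ext i
    simp only [coeff_contract hn, coeff_C_mul]
  rw [eval_contract_eq_of_X_pow_sub_C_dvd hn
      (X_pow_sub_C_dvd_powSubPowCofactor_pow_succ_sub n a e),
    contract_C_mul, contract_powSubPowCofactor hn, eval_mul, eval_C, eval_C,
    mul_left_comm, ← pow_succ]

end Cofactor

section Trace

variable {A B : Type*} [CommRing A] [CommRing B] [Algebra A B] (pb : PowerBasis A B) {a : A}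

theorem trace_powerBasis_gen_pow_of_not_dvd (ha : pb.gen ^ pb.dim = algebraMap A B a) {m : ℕ}
    (hm : ¬ pb.dim ∣ m) : Algebra.trace A B (pb.gen ^ m) = 0 := by
  rw [Algebra.trace_eq_matrix_trace pb.basis, Matrix.trace]
  refine Finset.sum_eq_zero fun i _ ↦ ?_
  let j : Fin pb.dim := ⟨(m + i) % pb.dim, Nat.mod_lt _ i.pos⟩
  have hji : j ≠ i := fun h ↦ hm <| by
    have : m + i ≡ 0 + i [MOD pb.dim] := by
      simpa [Nat.ModEq, Nat.mod_eq_of_lt i.isLt] using congrArg Fin.val h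
    exact (Nat.modEq_zero_iff_dvd).1 (this.add_right_cancel' _)
  have hmul : pb.gen ^ m * pb.basis i = a ^ ((m + i) / pb.dim) • pb.basis j := by
    rw [pb.basis_eq_pow, pb.basis_eq_pow, ← pow_add, Algebra.smul_def, map_pow, ← ha, ← pow_mul,
      ← pow_add, Nat.div_add_mod]
  rw [Matrix.diag_apply, Algebra.leftMulMatrix_eq_repr_mul, hmul, map_smul, Module.Basis.repr_self,
    Finsupp.smul_apply, Finsupp.single_eq_of_ne hji.symm, smul_zero]

theorem trace_powerBasis_gen_pow_dim_mul (ha : pb.gen ^ pb.dim = algebraMap A B a) (q : ℕ) :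
    Algebra.trace A B (pb.gen ^ (pb.dim * q)) = pb.dim • a ^ q := by
  rw [pow_mul, ha, ← map_pow, Algebra.trace_algebraMap_of_basis pb.basis, Fintype.card_fin]

theorem trace_aeval_powerBasis_gen [Nontrivial B] {R : Type*} [CommRing R] [Algebra R A]
    [Algebra R B] [IsScalarTower R A B] (ha : pb.gen ^ pb.dim = algebraMap A B a) (p : R[X]) :
    Algebra.trace A B (aeval pb.gen p) = aeval a (pb.dim • contract pb.dim p) := by
  have hdim := pb.dim_ne_zero
  induction p using Polynomial.induction_on' with
  | add p q hp hq => simp only [map_add, contract_add hdim, smul_add, hp, hq]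
  | monomial m c =>
    rw [aeval_monomial, ← Algebra.smul_def, LinearMap.map_smul_of_tower]
    by_cases hm : pb.dim ∣ m
    · obtain ⟨q, rfl⟩ := hm
      have hcontract : contract pb.dim (monomial (pb.dim * q) c) = monomial q c := by
        rw [mul_comm, ← expand_monomial, contract_expand _ hdim]
      rw [trace_powerBasis_gen_pow_dim_mul pb ha, hcontract, map_nsmul, aeval_monomial,
        ← Algebra.smul_def, smul_comm]
    · have hcontract : contract pb.dim (monomial m c) = 0 := by
        ext q
        rw [coeff_contract hdim, coeff_monomial_of_ne, coeff_zero]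
        exact fun h ↦ hm ⟨q, by rw [← h, mul_comm]⟩
      rw [trace_powerBasis_gen_pow_of_not_dvd pb ha hm, hcontract, smul_zero, smul_zero, map_zero]

end Trace

theorem trace_inv_powerBasis_gen_sub_pow {k K L : Type*} [Field k] [Field K] [Field L]
    [Algebra k K] [Algebra k L] [Algebra K L] [IsScalarTower k K L] (pb : PowerBasis K L) {a : K}
    (ha : pb.gen ^ pb.dim = algebraMap K L a) {ψ : k} (hψ : a ≠ algebraMap k K (ψ ^ pb.dim))
    (e : ℕ) :
    Algebra.trace K L ((pb.gen - algebraMap k L ψ) ^ e)⁻¹ =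
      aeval a (pb.dim • contract pb.dim (powSubPowCofactor pb.dim ψ ^ e)) /
        (a - algebraMap k K (ψ ^ pb.dim)) ^ e := by
  set d := a - algebraMap k K (ψ ^ pb.dim) with hd
  have hd0 : d ≠ 0 := sub_ne_zero.2 hψ
  have hmul : aeval pb.gen (powSubPowCofactor pb.dim ψ) * (pb.gen - algebraMap k L ψ) =
      algebraMap K L d := by
    simpa [ha, hd, ← IsScalarTower.algebraMap_apply] using
      congrArg (aeval pb.gen) (powSubPowCofactor_mul_X_sub_C pb.dim ψ)
  have hgen : pb.gen - algebraMap k L ψ ≠ 0 :=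
    right_ne_zero_of_mul (hmul ▸ (map_ne_zero (algebraMap K L)).2 hd0)
  have hinv : ((pb.gen - algebraMap k L ψ) ^ e)⁻¹ =
      (d ^ e)⁻¹ • aeval pb.gen (powSubPowCofactor pb.dim ψ ^ e) := by
    rw [eq_inv_smul_iff₀ (pow_ne_zero e hd0), Algebra.smul_def, map_pow, map_pow, ← hmul, mul_pow,
      mul_inv_cancel_right₀ (pow_ne_zero e hgen)]
  rw [hinv, map_smul, trace_aeval_powerBasis_gen pb ha, smul_eq_mul, inv_mul_eq_div]

section RatFunc

open IntermediateField

variable (k : Type*) [Field k]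

theorem finrank_ratFunc_adjoin_X_pow (n : ℕ) :
    Module.finrank k⟮(RatFunc.X : RatFunc k) ^ n⟯ (RatFunc k) = n := by
  have h : (RatFunc.X : RatFunc k) ^ n = algebraMap k[X] (RatFunc k) (X ^ n) := by
    rw [map_pow, RatFunc.algebraMap_X]
  rw [RatFunc.finrank_eq_max_natDegree, h, RatFunc.num_algebraMap, RatFunc.denom_algebraMap,
    natDegree_X_pow, natDegree_one, max_eq_left n.zero_le]

theorem exists_powerBasis_ratFunc_gen_eq_X {n : ℕ} (hn : n ≠ 0) :
    ∃ pb : PowerBasis k⟮(RatFunc.X : RatFunc k) ^ n⟯ (RatFunc k),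
      pb.gen = RatFunc.X ∧ pb.dim = n := by
  have hfinrank := finrank_ratFunc_adjoin_X_pow k n
  have : FiniteDimensional k⟮(RatFunc.X : RatFunc k) ^ n⟯ (RatFunc k) :=
    Module.finite_of_finrank_pos (hfinrank.symm ▸ Nat.pos_of_ne_zero hn)
  let pb := (adjoin.powerBasis (Algebra.IsIntegral.isIntegral (RatFunc.X : RatFunc k))).map
    (RatFunc.IntermediateField.adjoinXEquiv k⟮(RatFunc.X : RatFunc k) ^ n⟯)
  exact ⟨pb, rfl, pb.finrank.symm.trans hfinrank⟩

variable {k}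

theorem ratFunc_X_pow_ne_C {n : ℕ} (hn : n ≠ 0) (c : k) :
    (RatFunc.X : RatFunc k) ^ n ≠ RatFunc.C c := by
  rw [← RatFunc.algebraMap_X, ← RatFunc.algebraMap_C, ← map_pow,
    (RatFunc.algebraMap_injective k).ne_iff]
  exact fun h ↦ X_pow_sub_C_ne_zero (Nat.pos_of_ne_zero hn) c (sub_eq_zero.2 h)

theorem trace_inv_ratFunc_X_sub_C_pow {n : ℕ} (hn : n ≠ 0) (ψ : k) (e : ℕ) :
    (Algebra.trace k⟮(RatFunc.X : RatFunc k) ^ n⟯ (RatFunc k)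
      ((RatFunc.X - RatFunc.C ψ) ^ e)⁻¹ : RatFunc k) =
      aeval (RatFunc.X ^ n : RatFunc k) (n • contract n (powSubPowCofactor n ψ ^ e)) /
        (RatFunc.X ^ n - RatFunc.C (ψ ^ n)) ^ e := by
  obtain ⟨pb, hgen, hdim⟩ := exists_powerBasis_ratFunc_gen_eq_X k hn
  let t := AdjoinSimple.gen k ((RatFunc.X : RatFunc k) ^ n)
  have ht : pb.gen ^ pb.dim = algebraMap _ (RatFunc k) t := by rw [hgen, hdim]; rfl
  have hψ : t ≠ algebraMap k _ (ψ ^ pb.dim) :=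
    fun h ↦ ratFunc_X_pow_ne_C hn (ψ ^ pb.dim) (congrArg Subtype.val h)
  have htrace := trace_inv_powerBasis_gen_sub_pow pb ht hψ e
  rw [hgen, hdim] at htrace
  simpa [t] using congrArg Subtype.val htrace

end RatFunc

theorem stmt_3_general (k : Type*) [Field k] (n : ℕ) (hn : (n : k) ≠ 0)
    (J : IntermediateField k (RatFunc k))
    (hJ : J = IntermediateField.adjoin k {RatFunc.X ^ n})
    (ψ : k) (hψ : ψ ≠ 0) (e : ℕ) (he : 1 ≤ e) :
    ∃ F : Polynomial k,
      ((Algebra.trace ↥J (RatFunc k) (((RatFunc.X - RatFunc.C ψ) ^ e)⁻¹) : ↥J) : RatFunc k) =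
        Polynomial.aeval ((RatFunc.X : RatFunc k) ^ n) F /
          ((RatFunc.X : RatFunc k) ^ n - RatFunc.C (ψ ^ n)) ^ e ∧
      Polynomial.eval (ψ ^ n) F = (n * ψ ^ (n - 1)) ^ e ∧
      (n * ψ ^ (n - 1)) ^ e ≠ 0 := by
  subst hJ
  have hn0 : n ≠ 0 := by rintro rfl; exact hn Nat.cast_zero
  refine ⟨n • contract n (powSubPowCofactor n ψ ^ e), trace_inv_ratFunc_X_sub_C_pow hn0 ψ e, ?_,
    pow_ne_zero e (mul_ne_zero hn (pow_ne_zero _ hψ))⟩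
  rw [eval_smul, nsmul_eq_mul,
    natCast_mul_eval_contract_powSubPowCofactor_pow hn0 (Nat.one_le_iff_ne_zero.1 he)]

/-- **Lemma (trace of `(s - ψ)⁻ᵉ` for `k(s)/k(s³)` in characteristic 2).** -/
theorem stmt_3 (k : Type) [Field k] [CharP k 2] (ζ : k) (hζ : IsPrimitiveRoot ζ 3)
    (J : IntermediateField k (RatFunc k))
    (hJ : J = IntermediateField.adjoin k {RatFunc.X ^ 3})
    (ψ : k) (hψ : ψ ≠ 0) (e : ℕ) (he : 1 ≤ e) :
    ∃ F : Polynomial k,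
      ((Algebra.trace ↥J (RatFunc k) (((RatFunc.X - RatFunc.C ψ) ^ e)⁻¹) : ↥J) : RatFunc k) =
        Polynomial.aeval ((RatFunc.X : RatFunc k) ^ 3) F /
          ((RatFunc.X : RatFunc k) ^ 3 - RatFunc.C (ψ ^ 3)) ^ e ∧
      Polynomial.eval (ψ ^ 3) F = ψ ^ (2 * e) ∧
      ψ ^ (2 * e) ≠ 0 := by
  have three_eq_one : ((3 : ℕ) : k) = 1 := by rw [← Nat.cast_one, CharP.cast_eq_iff_mod_eq k 2]
  simpa only [three_eq_one, one_mul, ← pow_mul] using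
    stmt_3_general k 3 (three_eq_one.symm ▸ one_ne_zero) J hJ ψ hψ e he
end

section
/- Let k be an algebraically closed field of characteristic 2 and ζ ∈ k a primitive cube root of unity. Let G = A₄ = ⟨σ, ρ : σ² = ρ³ = (σρ)³ = 1⟩, set τ := ρσρ⁻¹, and let H = ⟨σ, τ⟩ be the unique Sylow 2-subgroup of G. For n ≥ 1 and φ ∈ k let V_φ be the 2n-dimensional representation of H over k given in block form by σ ↦ [[I_n, ζ(I_n + J_n(φ))], [0, I_n]] and τ ↦ [[I_n, ζ²I_n + J_n(φ)], [0, I_n]]. Then for every φ ∈ k \ {0}, the restriction to H of the induced representation satisfies Res_H^G (Ind_H^G V_φ) ≅ V_φ ⊕ V_{ζφ} ⊕ V_{ζ²φ} as representations of H over k. -/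
/-- The `n × n` upper-triangular Jordan block over `k` with eigenvalue `lam`. -/
def jordanBlock (k : Type) [Field k] (n : ℕ) (lam : k) : Matrix (Fin n) (Fin n) k :=
  Matrix.of fun i j => if i = j then lam else if (i : ℕ) + 1 = (j : ℕ) then 1 else 0

/-!
Conjugation by `ρ` cyclically permutes the involutions `σ ↦ τ ↦ στ ↦ σ` of `H`. In characteristic
`2` the element `στ` acts on `V_φ` through the off-diagonal block `1 + ζ² J_n(φ)`, so the three
off-diagonal blocks are, up to powers of `ζ`, equal to `1 + J_n(φ)`, `1 + ζ J_n(φ)` and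
`1 + ζ² J_n(φ)`. As `J_n(ζφ)` is conjugate to `ζ J_n(φ)`, twisting `V_φ` by conjugation by `ρ` gives
`V_{ζφ}`, and twisting twice gives `V_{ζ²φ}`. Finally, `ρ⁻ⁱ` carries the copy of `V_φ` in the
induced representation onto a copy of the `i`-th twist.
-/

open Representation

section LinearAlgebra

variable {R M M₁ M₂ M₃ : Type*} [Ring R] [AddCommGroup M] [Module R M]
  [AddCommGroup M₁] [Module R M₁] [AddCommGroup M₂] [Module R M₂] [AddCommGroup M₃] [Module R M₃]

lemma isInternal_comp_equiv {ι κ : Type*} [DecidableEq ι] [DecidableEq κ] {A : ι → Submodule R M}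
    (hA : DirectSum.IsInternal A) (e : κ ≃ ι) : DirectSum.IsInternal (A ∘ e) :=
  DirectSum.isInternal_submodule_of_iSupIndep_of_iSup_eq_top
    (hA.submodule_iSupIndep.comp e.injective) (e.iSup_comp.trans hA.submodule_iSup_eq_top)

lemma bijective_coprod_coprod_of_isInternal_range
    {f : M₁ →ₗ[R] M} {g : M₂ →ₗ[R] M} {h : M₃ →ₗ[R] M}
    (hf : Function.Injective f) (hg : Function.Injective g) (hh : Function.Injective h)
    (hint : DirectSum.IsInternal ![f.range, g.range, h.range]) :
    Function.Bijective (f.coprod (g.coprod h)) := by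
  obtain ⟨hfgh, hghf, -⟩ := iSupIndep_fin_three.1 hint.submodule_iSupIndep
  have hgh : Disjoint g.range h.range := hghf.mono_right le_sup_left
  have htop := hint.submodule_iSup_eq_top
  rw [iSup_fin_three, sup_assoc] at htop
  constructor
  · rw [← LinearMap.ker_eq_bot, LinearMap.ker_coprod_of_disjoint_range _ _
      (by rwa [LinearMap.range_coprod]), LinearMap.ker_coprod_of_disjoint_range _ _ hgh,
      LinearMap.ker_eq_bot.2 hf, LinearMap.ker_eq_bot.2 hg, LinearMap.ker_eq_bot.2 hh,
      Submodule.prod_bot, Submodule.prod_bot]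
  · rwa [← LinearMap.range_eq_top, LinearMap.range_coprod, LinearMap.range_coprod]

end LinearAlgebra

section Intertwining

variable {R K G X Y W : Type*} [AddCommGroup X] [AddCommGroup Y] [AddCommGroup W]

lemma nonempty_equiv_prod_prod_of_isInternal_range [Ring R] [Module R X] [Module R Y] [Module R W]
    {Z : Type*} [AddCommGroup Z] [Module R Z] [Monoid K] {U : Representation R K W}
    {V₁ : Representation R K X} {V₂ : Representation R K Y} {V₃ : Representation R K Z}
    {f : V₁.IntertwiningMap U} {g : V₂.IntertwiningMap U} {h : V₃.IntertwiningMap U}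
    (hf : Function.Injective f) (hg : Function.Injective g) (hh : Function.Injective h)
    (hint : DirectSum.IsInternal
      ![f.toLinearMap.range, g.toLinearMap.range, h.toLinearMap.range]) :
    Nonempty (U.Equiv (V₁.prod (V₂.prod V₃))) := by
  let e := LinearEquiv.ofBijective _ (bijective_coprod_coprod_of_isInternal_range hf hg hh hint)
  have he (v : X × Y × Z) : e v = f v.1 + (g v.2.1 + h v.2.2) := rfl
  refine ⟨Representation.Equiv.symm (.mk e fun x ↦ LinearMap.ext fun v ↦ ?_)⟩
  simp [he, IntertwiningMap.isIntertwining]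

lemma isIntertwiningMap_of_closure_eq_top [Semiring R] [Module R X] [Module R Y] [Group K]
    {V : Representation R K X} {V' : Representation R K Y} {S : Set K}
    (hS : Subgroup.closure S = ⊤) (f : X →ₗ[R] Y) (hf : ∀ s ∈ S, f ∘ₗ V s = V' s ∘ₗ f) (x : K) :
    f ∘ₗ V x = V' x ∘ₗ f := by
  have hx : x ∈ Subgroup.closure S := hS ▸ Subgroup.mem_top x
  induction hx using Subgroup.closure_induction with
  | mem s hs => exact hf s hs
  | one => ext; simp
  | mul x y _ _ hx hy =>
    rw [map_mul, map_mul, Module.End.mul_eq_comp, Module.End.mul_eq_comp, ← LinearMap.comp_assoc,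
      hx, LinearMap.comp_assoc, hy, LinearMap.comp_assoc]
  | inv x _ hx =>
    ext v
    have h := LinearMap.congr_fun hx (V x⁻¹ v)
    simp only [LinearMap.comp_apply, self_inv_apply] at h
    simp [h, inv_self_apply]

/-- The translate `g⁻¹ ∘ f` of a map `f` from `V` to the restriction of `U` along `j`, defined on
the twist of `V` by an endomorphism `α` that `j` turns into conjugation by `g`. -/
def translateIntertwiningMap [Semiring R] [Module R X] [Module R W] [Monoid K] [Group G]
    {U : Representation R G W} {V : Representation R K X} {j : K →* G} {α : K →* K} {g : G}
    (hα : ∀ x, j (α x) = g * j x * g⁻¹) (f : V.IntertwiningMap (U.comp j)) :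
    IntertwiningMap (V.comp α) (U.comp j) where
  toLinearMap := U g⁻¹ ∘ₗ f.toLinearMap
  isIntertwining' x := by
    ext v
    simp [f.isIntertwining, hα, inv_self_apply]

lemma exists_injective_intertwiningMap_range_eq_map [Semiring R] [Module R X] [Module R Y]
    [Module R W] [Monoid K] [Group G] {U : Representation R G W} {V : Representation R K X}
    {V' : Representation R K Y} {j : K →* G} {α : K →* K} {g : G}
    (hα : ∀ x, j (α x) = g * j x * g⁻¹) {f : V.IntertwiningMap (U.comp j)}
    (hf : Function.Injective f) (e : V'.Equiv (V.comp α)) :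
    ∃ f' : V'.IntertwiningMap (U.comp j), Function.Injective f' ∧
      f'.toLinearMap.range = f.toLinearMap.range.map (U g⁻¹) := by
  refine ⟨(translateIntertwiningMap hα f).comp e.toIntertwiningMap,
    ((U.apply_bijective g⁻¹).injective.comp hf).comp (EquivLike.injective e), ?_⟩
  rw [IntertwiningMap.comp_toLinearMap, LinearMap.range_comp_of_range_eq_top _
    (LinearMap.range_eq_top.2 (EquivLike.surjective e))]
  exact LinearMap.range_comp _ _

end Intertwining

section Matrix

variable {m R : Type*} [Fintype m] [DecidableEq m] [CommRing R] {a : R} {D X Y : Matrix m m R}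

lemma fromBlocks_one_mul_fromBlocks_one :
    (Matrix.fromBlocks 1 X 0 1 * Matrix.fromBlocks 1 Y 0 1 : Matrix (m ⊕ m) (m ⊕ m) R) =
      Matrix.fromBlocks 1 (X + Y) 0 1 := by
  simp [Matrix.fromBlocks_multiply, add_comm]

lemma toLin'_fromBlocks_smul_diag_comp (h : X * D = a • (D * Y)) :
    Matrix.toLin' (Matrix.fromBlocks (a • D) 0 0 D) ∘ₗ
        Matrix.toLin' (Matrix.fromBlocks 1 Y 0 1) =
      Matrix.toLin' (Matrix.fromBlocks 1 X 0 1) ∘ₗ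
        Matrix.toLin' (Matrix.fromBlocks (a • D) 0 0 D) := by
  rw [← Matrix.toLin'_mul, ← Matrix.toLin'_mul]
  simp [Matrix.fromBlocks_multiply, h]

end Matrix

section ScaledConjugation

variable {R A : Type*} [CommRing R] [Ring A] [Algebra R A] {ζ : R} {D J J' : A}

lemma sq_smul_one_add_mul_of_conj (hζ : ζ ^ 3 = 1) (h : D * J' = ζ • (J * D)) :
    (ζ ^ 2 • 1 + J) * D = ζ • (D * (ζ • (1 + J'))) := by
  calc (ζ ^ 2 • 1 + J) * D = ζ ^ 2 • D + (1 : R) • (J * D) := by simp [add_mul]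
    _ = ζ ^ 2 • D + ζ ^ 3 • (J * D) := by rw [hζ]
    _ = ζ • (D * (ζ • (1 + J'))) := by rw [mul_smul_comm, mul_add, mul_one, h]; module

lemma one_add_sq_smul_mul_of_conj (hζ : ζ ^ 3 = 1) (h : D * J' = ζ • (J * D)) :
    (1 + ζ ^ 2 • J) * D = ζ • (D * (ζ ^ 2 • 1 + J')) := by
  calc (1 + ζ ^ 2 • J) * D = (1 : R) • D + ζ ^ 2 • (J * D) := by simp [add_mul]
    _ = ζ ^ 3 • D + ζ ^ 2 • (J * D) := by rw [hζ]
    _ = ζ • (D * (ζ ^ 2 • 1 + J')) := by rw [mul_add, mul_smul_comm, mul_one, h]; module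

end ScaledConjugation

section KleinFour

variable {k : Type} [Field k] {n : ℕ} {ζ φ : k}

lemma diagonal_mul_jordanBlock {c : k} (hc : c ≠ 0) :
    Matrix.diagonal (fun i : Fin n ↦ c⁻¹ ^ (i : ℕ)) * jordanBlock k n (c * φ) =
      c • (jordanBlock k n φ * Matrix.diagonal fun i : Fin n ↦ c⁻¹ ^ (i : ℕ)) := by
  ext i j
  rw [Matrix.diagonal_mul, Matrix.smul_apply, Matrix.mul_diagonal, smul_eq_mul]
  simp only [jordanBlock, Matrix.of_apply]
  split_ifs with hij hij'
  · subst hij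
    ring
  · rw [← hij', pow_succ]
    field_simp
  · simp

/-- The representation `V` is the `V_φ` of the paper, for generators `s` and `t` (the paper's `σ`
and `τ`) of a Klein four group. -/
structure IsKleinJordan {K : Type*} [Group K] (ζ φ : k) (s t : K)
    (V : Representation k K (Fin n ⊕ Fin n → k)) : Prop where
  apply_left : V s = Matrix.toLin' (Matrix.fromBlocks 1 (ζ • (1 + jordanBlock k n φ)) 0 1)
  apply_right : V t = Matrix.toLin' (Matrix.fromBlocks 1
    (ζ ^ 2 • (1 : Matrix (Fin n) (Fin n) k) + jordanBlock k n φ) 0 1)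

namespace IsKleinJordan

variable {K : Type*} [Group K] {s t : K} {V V' : Representation k K (Fin n ⊕ Fin n → k)}

lemma apply_mul [CharP k 2] (hζ : IsPrimitiveRoot ζ 3) (hV : IsKleinJordan ζ φ s t V) :
    V (s * t) = Matrix.toLin' (Matrix.fromBlocks 1 (1 + ζ ^ 2 • jordanBlock k n φ) 0 1) := by
  have hsum : 1 + ζ + ζ ^ 2 = 0 := by
    simpa [Finset.sum_range_succ] using hζ.geom_sum_eq_zero (by norm_num)
  have hone : ζ + ζ ^ 2 = 1 := by linear_combination hsum - CharTwo.two_eq_zero (R := k)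
  have hsq : ζ + 1 = ζ ^ 2 := by
    linear_combination hsum - ζ ^ 2 * CharTwo.two_eq_zero (R := k)
  rw [map_mul, hV.apply_left, hV.apply_right, Module.End.mul_eq_comp, ← Matrix.toLin'_mul,
    fromBlocks_one_mul_fromBlocks_one]
  congr 2
  calc ζ • (1 + jordanBlock k n φ) + (ζ ^ 2 • 1 + jordanBlock k n φ)
      = (ζ + ζ ^ 2) • 1 + (ζ + 1) • jordanBlock k n φ := by module
    _ = 1 + ζ ^ 2 • jordanBlock k n φ := by rw [hone, hsq, one_smul]

lemma nonempty_equiv_comp [CharP k 2] (hζ : IsPrimitiveRoot ζ 3)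
    (hst : Subgroup.closure {s, t} = ⊤) {α : K →* K} (hαs : α s = t) (hαt : α t = s * t)
    (hV : IsKleinJordan ζ φ s t V) (hV' : IsKleinJordan ζ (ζ * φ) s t V') :
    Nonempty (V'.Equiv (V.comp α)) := by
  have hζ0 : ζ ≠ 0 := hζ.ne_zero (by norm_num)
  have hζ3 : ζ ^ 3 = 1 := hζ.pow_eq_one
  let D : Matrix (Fin n) (Fin n) k := Matrix.diagonal fun i ↦ ζ⁻¹ ^ (i : ℕ)
  have hD : IsUnit D := Matrix.isUnit_diagonal.2 <| Pi.isUnit_iff.2 fun i ↦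
    (inv_ne_zero hζ0).isUnit.pow _
  have hDJ : D * jordanBlock k n (ζ * φ) = ζ • (jordanBlock k n φ * D) :=
    diagonal_mul_jordanBlock hζ0
  have hP : IsUnit (Matrix.fromBlocks (ζ • D) 0 0 D) :=
    Matrix.isUnit_fromBlocks_zero₂₁.2 ⟨hD.smul (Units.mk0 ζ hζ0), hD⟩
  let e := Matrix.toLinearEquiv' _ hP.invertible
  have he : e.toLinearMap = Matrix.toLin' (Matrix.fromBlocks (ζ • D) 0 0 D) := rfl
  refine ⟨.mk e (isIntertwiningMap_of_closure_eq_top hst _ ?_)⟩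
  rintro x (rfl | rfl)
  · rw [MonoidHom.comp_apply, hαs, hV'.apply_left, hV.apply_right, he]
    exact toLin'_fromBlocks_smul_diag_comp (sq_smul_one_add_mul_of_conj hζ3 hDJ)
  · rw [MonoidHom.comp_apply, hαt, hV'.apply_right, hV.apply_mul hζ, he]
    exact toLin'_fromBlocks_smul_diag_comp (one_add_sq_smul_mul_of_conj hζ3 hDJ)

end IsKleinJordan

end KleinFour

section Tetrahedral

variable {G : Type*} [Group G] {σ τ ρ : G}

lemma closure_pair_subtype_eq_top {H : Subgroup G} (hH : H = Subgroup.closure {σ, τ})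
    (hσ : σ ∈ H) (hτ : τ ∈ H) :
    Subgroup.closure {(⟨σ, hσ⟩ : H), (⟨τ, hτ⟩ : H)} = ⊤ := by
  subst hH
  rw [← Subgroup.closure_closure_coe_preimage]
  congr 1
  ext x
  simp [Subtype.ext_iff]

lemma conj_conj_eq_mul_conj (hσ : σ ^ 2 = 1) (hρ : ρ ^ 3 = 1) (hσρ : (σ * ρ) ^ 3 = 1) :
    ρ * (ρ * σ * ρ⁻¹) * ρ⁻¹ = σ * (ρ * σ * ρ⁻¹) := by
  have hρρ : ρ * ρ = ρ⁻¹ := eq_inv_of_mul_eq_one_left (by rw [← hρ, pow_three'])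
  have hσσ : σ⁻¹ = σ := inv_eq_of_mul_eq_one_left (by rw [← hσ, sq])
  have hσρσ : σ * ρ * σ = ρ⁻¹ * σ * ρ⁻¹ := by
    rw [← hσσ, ← mul_inv_rev, ← mul_inv_rev, hσσ]
    exact eq_inv_of_mul_eq_one_left (by rw [← hσρ, pow_three']; group)
  calc ρ * (ρ * σ * ρ⁻¹) * ρ⁻¹ = ρ * ρ * σ * (ρ * ρ)⁻¹ := by group
    _ = ρ⁻¹ * σ * (ρ⁻¹ * ρ⁻¹) := by rw [hρρ, ← mul_inv_rev, hρρ]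
    _ = σ * (ρ * σ * ρ⁻¹) := by rw [← mul_assoc, ← hσρσ]; group

lemma conj_mem_of_eq_closure_pair {H : Subgroup G} (hH : H = Subgroup.closure {σ, τ})
    (hσ : ρ * σ * ρ⁻¹ ∈ H) (hτ : ρ * τ * ρ⁻¹ ∈ H) (h : H) : ρ * h * ρ⁻¹ ∈ H := by
  have hle : Subgroup.closure {σ, τ} ≤ H.comap (MulAut.conj ρ).toMonoidHom := by
    rw [Subgroup.closure_le]
    rintro x (rfl | rfl)
    exacts [hσ, hτ]
  exact hle (hH ▸ h.2)

lemma isInternal_map_inv_of_pow_three_eq_one {k W : Type*} [Ring k] [AddCommGroup W] [Module k W]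
    {U : Representation k G W} {p : Submodule k W} (hρ : ρ ^ 3 = 1)
    (hint : DirectSum.IsInternal fun i : Fin 3 ↦ p.map (U ρ ^ (i : ℕ))) :
    DirectSum.IsInternal ![p, p.map (U ρ⁻¹), (p.map (U ρ⁻¹)).map (U ρ⁻¹)] := by
  have hinv : ρ⁻¹ = ρ ^ 2 := inv_eq_of_mul_eq_one_left (by rw [← hρ, ← pow_succ])
  have hinv_sq : ρ⁻¹ * ρ⁻¹ = ρ := by rw [hinv, ← pow_add, pow_succ, hρ, one_mul]
  have hmap : p.map (U ρ⁻¹) = p.map (U ρ ^ 2) := by rw [hinv, map_pow]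
  have hmap_map : (p.map (U ρ⁻¹)).map (U ρ⁻¹) = p.map (U ρ) := by
    rw [← Submodule.map_comp, ← Module.End.mul_eq_comp, ← map_mul, hinv_sq]
  convert isInternal_comp_equiv hint (Equiv.neg (Fin 3)) using 1
  funext i
  fin_cases i
  · exact p.map_id.symm
  · exact hmap
  · exact hmap_map.trans (by simp [show (-2 : Fin 3) = 1 from rfl])

end Tetrahedral

theorem stmt_12_general {k : Type} [Field k] [CharP k 2] {ζ : k} (hζ : IsPrimitiveRoot ζ 3)
    {G : Type*} [Group G] {σ ρ τ : G} (hσ : σ ^ 2 = 1) (hρ : ρ ^ 3 = 1) (hσρ : (σ * ρ) ^ 3 = 1)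
    (hτ : τ = ρ * σ * ρ⁻¹) {H : Subgroup G} (hH : H = Subgroup.closure {σ, τ})
    (hσH : σ ∈ H) (hτH : τ ∈ H) {n : ℕ} {φ : k}
    {V₁ V₂ V₃ : Representation k H (Fin n ⊕ Fin n → k)}
    (hV₁ : IsKleinJordan ζ φ ⟨σ, hσH⟩ ⟨τ, hτH⟩ V₁)
    (hV₂ : IsKleinJordan ζ (ζ * φ) ⟨σ, hσH⟩ ⟨τ, hτH⟩ V₂)
    (hV₃ : IsKleinJordan ζ (ζ ^ 2 * φ) ⟨σ, hσH⟩ ⟨τ, hτH⟩ V₃)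
    {W : Type*} [AddCommGroup W] [Module k W] {U : Representation k G W}
    {f : V₁.IntertwiningMap (U.comp H.subtype)} (hf : Function.Injective f)
    (hint : DirectSum.IsInternal fun i : Fin 3 ↦ f.toLinearMap.range.map (U ρ ^ (i : ℕ))) :
    Nonempty (Representation.Equiv (U.comp H.subtype) (V₁.prod (V₂.prod V₃))) := by
  have hρσ : ρ * σ * ρ⁻¹ = τ := hτ.symm
  have hρτ : ρ * τ * ρ⁻¹ = σ * τ := hτ ▸ conj_conj_eq_mul_conj hσ hρ hσρ
  let α : H →* H := ((MulAut.conj ρ).toMonoidHom.comp H.subtype).codRestrict H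
    (conj_mem_of_eq_closure_pair hH (hρσ ▸ hτH) (hρτ ▸ mul_mem hσH hτH))
  have hα (x : H) : H.subtype (α x) = ρ * H.subtype x * ρ⁻¹ := rfl
  have hασ : α ⟨σ, hσH⟩ = ⟨τ, hτH⟩ := Subtype.ext hρσ
  have hατ : α ⟨τ, hτH⟩ = ⟨σ, hσH⟩ * ⟨τ, hτH⟩ := Subtype.ext hρτ
  have hgen := closure_pair_subtype_eq_top hH hσH hτH
  rw [sq, mul_assoc] at hV₃
  obtain ⟨e₂⟩ := hV₁.nonempty_equiv_comp hζ hgen hασ hατ hV₂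
  obtain ⟨e₃⟩ := hV₂.nonempty_equiv_comp hζ hgen hασ hατ hV₃
  obtain ⟨f₂, hf₂, hrange₂⟩ := exists_injective_intertwiningMap_range_eq_map hα hf e₂
  obtain ⟨f₃, hf₃, hrange₃⟩ := exists_injective_intertwiningMap_range_eq_map hα hf₂ e₃
  refine nonempty_equiv_prod_prod_of_isInternal_range hf hf₂ hf₃ ?_
  rw [hrange₃, hrange₂]
  exact isInternal_map_inv_of_pow_three_eq_one hρ hint

/-- **Lemma.** Let `G = A₄ = ⟨σ, ρ⟩`, `τ = ρσρ⁻¹`, `H = ⟨σ, τ⟩` its Sylow 2-subgroup.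
For `φ ≠ 0`, let `V_φ` be the `2n`-dimensional representation of `H` given by the stated
block matrices.  If `U` is any `G`-representation realizing the induced module
`Ind_H^G V_φ` — i.e. there is an injective `H`-equivariant embedding `ι : V_φ → U` whose
`ρ`-translates `ι(V_φ), ρ·ι(V_φ), ρ²·ι(V_φ)` give an internal direct sum decomposition
of `U` — then `Res_H^G U ≅ V_φ ⊕ V_{ζφ} ⊕ V_{ζ²φ}` as representations of `H`. -/
theorem stmt_12 (k : Type) [Field k] [IsAlgClosed k] [CharP k 2]
    (ζ : k) (hζ : IsPrimitiveRoot ζ 3)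
    (G : Type) [Group G] (σ ρ : G)
    (hσ : σ ^ 2 = 1) (hρ : ρ ^ 3 = 1) (hσρ : (σ * ρ) ^ 3 = 1)
    (hcard : Nat.card G = 12) (hgen : Subgroup.closure {σ, ρ} = ⊤)
    (τ : G) (hτ : τ = ρ * σ * ρ⁻¹)
    (H : Subgroup G) (hH : H = Subgroup.closure {σ, τ})
    (hσH : σ ∈ H) (hτH : τ ∈ H)
    (n : ℕ) (hn : 1 ≤ n) (φ : k) (hφ : φ ≠ 0)
    -- the representations V_φ, V_{ζφ}, V_{ζ²φ} of H
    (V1 V2 V3 : Representation k ↥H (Fin n ⊕ Fin n → k))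
    (hV1σ : V1 ⟨σ, hσH⟩ =
      Matrix.toLin' (Matrix.fromBlocks 1 (ζ • (1 + jordanBlock k n φ)) 0 1))
    (hV1τ : V1 ⟨τ, hτH⟩ =
      Matrix.toLin' (Matrix.fromBlocks 1
        (ζ ^ 2 • (1 : Matrix (Fin n) (Fin n) k) + jordanBlock k n φ) 0 1))
    (hV2σ : V2 ⟨σ, hσH⟩ =
      Matrix.toLin' (Matrix.fromBlocks 1 (ζ • (1 + jordanBlock k n (ζ * φ))) 0 1))
    (hV2τ : V2 ⟨τ, hτH⟩ =
      Matrix.toLin' (Matrix.fromBlocks 1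
        (ζ ^ 2 • (1 : Matrix (Fin n) (Fin n) k) + jordanBlock k n (ζ * φ)) 0 1))
    (hV3σ : V3 ⟨σ, hσH⟩ =
      Matrix.toLin' (Matrix.fromBlocks 1 (ζ • (1 + jordanBlock k n (ζ ^ 2 * φ))) 0 1))
    (hV3τ : V3 ⟨τ, hτH⟩ =
      Matrix.toLin' (Matrix.fromBlocks 1
        (ζ ^ 2 • (1 : Matrix (Fin n) (Fin n) k) + jordanBlock k n (ζ ^ 2 * φ)) 0 1))
    -- a G-representation U realizing Ind_H^G V_φ
    (W : Type) [AddCommGroup W] [Module k W]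
    (U : Representation k G W)
    (ι : (Fin n ⊕ Fin n → k) →ₗ[k] W)
    (hinj : Function.Injective ι)
    (hequiv : ∀ (h : ↥H) (v : Fin n ⊕ Fin n → k), ι (V1 h v) = U (h : G) (ι v))
    (hint : DirectSum.IsInternal fun i : Fin 3 =>
      Submodule.map (U ρ ^ (i : ℕ)) (LinearMap.range ι)) :
    -- conclusion: Res_H^G U ≅ V_φ ⊕ V_{ζφ} ⊕ V_{ζ²φ}
    ∃ e : W ≃ₗ[k] ((Fin n ⊕ Fin n → k) × (Fin n ⊕ Fin n → k) × (Fin n ⊕ Fin n → k)),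
      ∀ (h : ↥H) (w : W),
        e (U (h : G) w) = (V1 h (e w).1, V2 h (e w).2.1, V3 h (e w).2.2) := by
  let f : V1.IntertwiningMap (U.comp H.subtype) := ⟨ι, fun h ↦ LinearMap.ext (hequiv h)⟩
  obtain ⟨e⟩ := stmt_12_general hζ hσ hρ hσρ hτ hH hσH hτH ⟨hV1σ, hV1τ⟩ ⟨hV2σ, hV2τ⟩ ⟨hV3σ, hV3τ⟩
    (f := f) hinj hint
  exact ⟨e.toLinearEquiv, e.isIntertwining⟩
end

section
/- Let k be an algebraically closed field of characteristic 2 and ζ ∈ k a primitive cube root of unity. Let G = A₄ = ⟨σ, ρ : σ² = ρ³ = (σρ)³ = 1⟩, set τ := ρσρ⁻¹, and let H = ⟨σ, τ⟩ be the unique Sylow 2-subgroup of G. For n ≥ 1 let V₀ be the 2n-dimensional representation of H over k given in block form by σ ↦ [[I_n, ζ(I_n + J_n(0))], [0, I_n]] and τ ↦ [[I_n, ζ²I_n + J_n(0)], [0, I_n]]. Then there exist representations W₀, W₁, W₂ of G over k such that Ind_H^G V₀ ≅ W₀ ⊕ W₁ ⊕ W₂ as representations of G, and Res_H^G W_i ≅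 V₀ as representations of H for each i = 0, 1, 2. -/
/-!
The representation `V₀` carries an operator `B` of order three with `B V₀(ρhρ⁻¹) = V₀(h) B` for
`h ∈ H`: conjugation by `ρ` acts on the pencil of off-diagonal blocks through a diagonal matrix
of powers of `ζ`. Hence, for every cube root of unity `c`, the relative trace
`φ_c = ∑ i, ρⁱ ∘ ι ∘ (cB)ⁱ` of the embedding `ι` of `V₀` into the induced module is `H`-equivariant
and has a `ρ`-stable range, so it identifies `V₀` with the restriction of a subrepresentation.
The three maps `φ_c` are obtained from the coset embeddings `ρⁱ ∘ ι` by an invertible Vandermonde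
matrix, so these subrepresentations form a direct sum decomposition.
-/

section Representation

theorem semiconjBy_map_of_closure_eq_top {G M : Type*} [Group G] [Monoid M] {f g : G →* M} {b : M}
    {s : Set G} (hs : Subgroup.closure s = ⊤) (h : ∀ x ∈ s, SemiconjBy b (f x) (g x)) (x : G) :
    SemiconjBy b (f x) (g x) := by
  have hx : x ∈ Subgroup.closure s := hs ▸ Subgroup.mem_top x
  induction hx using Subgroup.closure_induction with
  | mem x hx => exact h x hx
  | one => simpa only [map_one] using SemiconjBy.one_right b
  | mul x y _ _ hx hy => simpa only [map_mul] using hx.mul_right hy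
  | inv x _ hx =>
    exact SemiconjBy.units_inv_right (x := f.toHomUnits x) (y := g.toHomUnits x) hx

variable {k G V W : Type*} [CommRing k] [Group G] [AddCommGroup V] [Module k V]
  [AddCommGroup W] [Module k W] {U : Representation k G W}

theorem exists_isIntertwiningMap_of_injective {φ : V →ₗ[k] W} (hφ : Function.Injective φ)
    (h : ∀ g, ∃ T : Module.End k V, U g ∘ₗ φ = φ ∘ₗ T) :
    ∃ X : Representation k G V, X.IsIntertwiningMap U φ := by
  choose T hT using h
  have hT' (g : G) (v : V) : φ (T g v) = U g (φ v) := (LinearMap.congr_fun (hT g) v).symm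
  refine ⟨⟨⟨T, ?_⟩, fun a b => ?_⟩, ⟨hT'⟩⟩
  · ext v
    exact hφ (by simp [hT'])
  · ext v
    exact hφ (by simp [hT'])

theorem exists_linearEquiv_pi_of_bijective_sum {κ : Type*} [Fintype κ]
    {φ : κ → V →ₗ[k] W} (hφ : Function.Bijective fun f : κ → V => ∑ j, φ j (f j))
    {X : κ → Representation k G V} (hX : ∀ j, (X j).IsIntertwiningMap U (φ j)) :
    ∃ e : W ≃ₗ[k] (κ → V), ∀ g w j, e (U g w) j = X j g (e w j) := by
  let Φ : (κ → V) ≃ₗ[k] W :=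
    LinearEquiv.ofBijective (∑ j, φ j ∘ₗ LinearMap.proj j) (by
      convert hφ using 2 with f
      simp)
  have hΦ (f : κ → V) : Φ f = ∑ j, φ j (f j) := by simp [Φ]
  refine ⟨Φ.symm, fun g w j => ?_⟩
  obtain ⟨f, rfl⟩ := Φ.surjective w
  have hUΦ : U g (Φ f) = Φ fun j => X j g (f j) := by
    simp only [hΦ, map_sum, (hX _).isIntertwining]
  simp only [hUΦ, LinearEquiv.symm_apply_apply]

end Representation

theorem injective_of_injective_sum {κ V W F : Type*} [Fintype κ]
    [AddCommMonoid V] [AddCommMonoid W] [FunLike F V W] [ZeroHomClass F V W] {φ : κ → F}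
    (hφ : Function.Injective fun f : κ → V => ∑ j, φ j (f j)) (j : κ) :
    Function.Injective (φ j) := by
  classical
  have hsingle (v : V) : ∑ i, φ i ((Pi.single j v : κ → V) i) = φ j v := by
    rw [Fintype.sum_eq_single j fun i hi => by rw [Pi.single_eq_of_ne hi, map_zero],
      Pi.single_eq_same]
  intro v w hvw
  exact Pi.single_injective j (hφ (by simpa only [hsingle] using hvw))

theorem bijective_sum_of_isInternal_range {k κ V W : Type*} [Ring k] [Fintype κ] [DecidableEq κ]
    [AddCommGroup V] [Module k V] [AddCommGroup W] [Module k W] {φ : κ → V →ₗ[k] W}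
    (hφ : ∀ i, Function.Injective (φ i))
    (h : DirectSum.IsInternal fun i => LinearMap.range (φ i)) :
    Function.Bijective fun f : κ → V => ∑ i, φ i (f i) := by
  let E (i : κ) := LinearEquiv.ofInjective (φ i) (hφ i)
  have hfactor : (fun f : κ → V => ∑ i, φ i (f i)) =
      DirectSum.coeLinearMap (fun i => LinearMap.range (φ i)) ∘
        (DirectSum.linearEquivFunOnFintype k κ _).symm ∘ Pi.map fun i => E i := by
    classical
    funext f
    simp only [Function.comp_apply]
    rw [DirectSum.coeLinearMap_eq_dfinsuppSum, DFinsupp.sum_eq_sum_fintype _ fun i => rfl]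
    rfl
  rw [hfactor]
  exact h.comp ((LinearEquiv.bijective _).comp (.piMap fun i => (E i).bijective))

section RelativeTrace

variable {k V W : Type*} [AddCommGroup V] [AddCommGroup W]

section CommRing

variable [CommRing k] [Module k V] [Module k W] (m : ℕ) (P : Module.End k W) (ι : V →ₗ[k] W)
  (B : Module.End k V)

/-- The relative trace `∑_{i < m} Pⁱ ∘ ι ∘ Bⁱ` of a linear map `ι`. When `P` and `B` have order
dividing `m` it is the sum of `ι` over its orbit under the action `ψ ↦ P ∘ ψ ∘ B` of a cyclic group
of order `m`. Working with `B` as the inverse of the operator by which the cyclic group acts on `V`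
keeps all exponents nonnegative. -/
def relativeTrace : V →ₗ[k] W :=
  ∑ i ∈ Finset.range m, (P ^ i) ∘ₗ ι ∘ₗ (B ^ i)

variable {m P B}

theorem relativeTrace_apply (v : V) :
    relativeTrace m P ι B v = ∑ i ∈ Finset.range m, (P ^ i) (ι ((B ^ i) v)) := by
  simp [relativeTrace]

theorem comp_relativeTrace_comp (hP : P ^ m = 1) (hB : B ^ m = 1) :
    P ∘ₗ relativeTrace m P ι B ∘ₗ B = relativeTrace m P ι B := by
  ext v
  have hcyclic := (Finset.sum_range_succ' (fun i => (P ^ i) (ι ((B ^ i) v))) m).symm.trans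
    (Finset.sum_range_succ _ m)
  rw [hP, hB, pow_zero, pow_zero, add_left_inj] at hcyclic
  simpa only [LinearMap.comp_apply, relativeTrace_apply, map_sum, ← Module.End.mul_apply,
    ← pow_succ', ← pow_succ] using hcyclic

theorem comp_relativeTrace [NeZero m] (hP : P ^ m = 1) (hB : B ^ m = 1) :
    P ∘ₗ relativeTrace m P ι B = relativeTrace m P ι B ∘ₗ B ^ (m - 1) := by
  have hBB : B ∘ₗ B ^ (m - 1) = LinearMap.id := by
    rw [← Module.End.mul_eq_comp, mul_pow_sub_one (NeZero.ne m), hB, Module.End.one_eq_id]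
  calc P ∘ₗ relativeTrace m P ι B
      = (P ∘ₗ relativeTrace m P ι B ∘ₗ B) ∘ₗ B ^ (m - 1) := by
        simp only [LinearMap.comp_assoc, hBB, LinearMap.comp_id]
    _ = relativeTrace m P ι B ∘ₗ B ^ (m - 1) := by rw [comp_relativeTrace_comp ι hP hB]

variable {ι} {G : Type*} [Group G] {H : Subgroup G} [H.Normal] {ρ : G} {V₀ : Representation k H V}
  {U : Representation k G W}

theorem isIntertwiningMap_conj_comp (hB : ∀ h, SemiconjBy B (V₀ (MulAut.conjNormal ρ h)) (V₀ h))
    (hι : V₀.IsIntertwiningMap (U.comp H.subtype) ι) :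
    V₀.IsIntertwiningMap (U.comp H.subtype) (U ρ ∘ₗ ι ∘ₗ B) where
  isIntertwining h v := by
    obtain ⟨h, rfl⟩ := (MulAut.conjNormal ρ).surjective h
    calc U ρ (ι (B (V₀ (MulAut.conjNormal ρ h) v)))
        = U ρ (ι (V₀ h (B v))) := by rw [← Module.End.mul_apply, (hB h).eq, Module.End.mul_apply]
      _ = U ρ (U h (ι (B v))) := congrArg (U ρ) (hι.isIntertwining h (B v))
      _ = U (ρ * h * ρ⁻¹) (U ρ (ι (B v))) := by
        rw [← Module.End.mul_apply, ← Module.End.mul_apply, ← map_mul, ← map_mul,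
          inv_mul_cancel_right]
      _ = U (MulAut.conjNormal ρ h : H) (U ρ (ι (B v))) := by rw [MulAut.conjNormal_apply]

theorem isIntertwiningMap_relativeTrace
    (hB : ∀ h, SemiconjBy B (V₀ (MulAut.conjNormal ρ h)) (V₀ h))
    (hι : V₀.IsIntertwiningMap (U.comp H.subtype) ι) :
    V₀.IsIntertwiningMap (U.comp H.subtype) (relativeTrace m (U ρ) ι B) where
  isIntertwining h v := by
    have hterm (i : ℕ) : V₀.IsIntertwiningMap (U.comp H.subtype) ((U ρ ^ i) ∘ₗ ι ∘ₗ (B ^ i)) := by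
      induction i with
      | zero => exact hι
      | succ i ih =>
        rw [pow_succ' (U ρ), pow_succ B]
        exact isIntertwiningMap_conj_comp hB ih
    simp only [relativeTrace_apply, map_sum]
    exact Finset.sum_congr rfl fun i _ => (hterm i).isIntertwining h v

theorem exists_comp_relativeTrace_eq [NeZero m] (hG : H ⊔ Subgroup.zpowers ρ = ⊤) (hρ : ρ ^ m = 1)
    (hB : B ^ m = 1) (hBH : ∀ h, SemiconjBy B (V₀ (MulAut.conjNormal ρ h)) (V₀ h))
    (hι : V₀.IsIntertwiningMap (U.comp H.subtype) ι) (g : G) :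
    ∃ T : Module.End k V,
      U g ∘ₗ relativeTrace m (U ρ) ι B = relativeTrace m (U ρ) ι B ∘ₗ T := by
  have hUρ : U ρ ^ m = 1 := by rw [← map_pow, hρ, map_one]
  obtain ⟨h, hh, z, hz, rfl⟩ := Subgroup.mem_sup_of_normal_left.mp (hG ▸ Subgroup.mem_top g)
  obtain ⟨i, rfl⟩ := (isOfFinOrder_iff_pow_eq_one.mpr
    ⟨m, Nat.pos_of_neZero m, hρ⟩).mem_powers_iff_mem_zpowers.mpr hz
  have hpow (i : ℕ) : (U ρ ^ i) ∘ₗ relativeTrace m (U ρ) ι B =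
      relativeTrace m (U ρ) ι B ∘ₗ (B ^ (m - 1)) ^ i :=
    Module.End.commute_pow_left_of_commute (comp_relativeTrace ι hUρ hB) i
  refine ⟨V₀ ⟨h, hh⟩ * (B ^ (m - 1)) ^ i, LinearMap.ext fun v => ?_⟩
  rw [map_mul, map_pow, Module.End.mul_eq_comp, LinearMap.comp_assoc, hpow]
  exact ((isIntertwiningMap_relativeTrace hBH hι).isIntertwining ⟨h, hh⟩ _).symm

end CommRing

section Field

variable [Field k] [Module k V] [Module k W] {m : ℕ} {ζ : k}

open scoped Matrix.Module in
theorem bijective_sum_pow_smul (hζ : IsPrimitiveRoot ζ m) :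
    Function.Bijective fun (f : Fin m → V) (i : Fin m) => ∑ j : Fin m, ζ ^ (i * j : ℕ) • f j := by
  have hinj : Function.Injective fun i : Fin m => ζ ^ (i : ℕ) := fun i j hij =>
    Fin.ext (hζ.pow_inj i.isLt j.isLt hij)
  have hunit : IsUnit (Matrix.vandermonde fun i : Fin m => ζ ^ (i : ℕ)) :=
    (Matrix.isUnit_iff_isUnit_det _).mpr (Matrix.det_vandermonde_ne_zero_iff.mpr hinj).isUnit
  simpa only [Matrix.Module.smul_def, Matrix.vandermonde_apply, ← pow_mul] using
    hunit.smul_bijective (β := Fin m → V)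

theorem bijective_sum_relativeTrace [NeZero m] (hζ : IsPrimitiveRoot ζ m) {P : Module.End k W}
    {ι : V →ₗ[k] W} {B : Module.End k V} (hB : B ^ m = 1)
    (hι : Function.Bijective fun f : Fin m → V => ∑ i : Fin m, (P ^ (i : ℕ)) (ι (f i))) :
    Function.Bijective fun f : Fin m → V =>
      ∑ j : Fin m, relativeTrace m P ι (ζ ^ (j : ℕ) • B) (f j) := by
  have hBbij : Function.Bijective (Pi.map fun i : Fin m => ⇑(B ^ (i : ℕ))) :=
    .piMap fun i => (Module.End.isUnit_iff _).mp ((IsUnit.of_pow_eq_one hB (NeZero.ne m)).pow i)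
  convert hι.comp (hBbij.comp (bijective_sum_pow_smul hζ)) using 2 with f
  simp only [relativeTrace_apply, Finset.sum_range, smul_pow, ← pow_mul, Function.comp_apply,
    Pi.map_apply, map_sum, map_smul, LinearMap.smul_apply]
  rw [Finset.sum_comm]
  simp only [mul_comm]

theorem exists_decomposition_of_conj_semiconjBy [NeZero m] (hζ : IsPrimitiveRoot ζ m)
    {G : Type*} [Group G] {H : Subgroup G} [H.Normal] {ρ : G} (hρ : ρ ^ m = 1)
    (hG : H ⊔ Subgroup.zpowers ρ = ⊤) {V₀ : Representation k H V} {U : Representation k G W}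
    {ι : V →ₗ[k] W} (hinj : Function.Injective ι)
    (hι : V₀.IsIntertwiningMap (U.comp H.subtype) ι)
    (hint : DirectSum.IsInternal fun i : Fin m =>
      Submodule.map (U ρ ^ (i : ℕ)) (LinearMap.range ι))
    {B : Module.End k V} (hB : B ^ m = 1)
    (hBH : ∀ h, SemiconjBy B (V₀ (MulAut.conjNormal ρ h)) (V₀ h)) :
    ∃ X : Fin m → Representation k G V,
      (∃ e : W ≃ₗ[k] (Fin m → V), ∀ g w i, e (U g w) i = X i g (e w i)) ∧
      ∀ i, (X i).comp H.subtype = V₀ := by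
  let φ (j : Fin m) : V →ₗ[k] W := relativeTrace m (U ρ) ι (ζ ^ (j : ℕ) • B)
  have hUρ (i : ℕ) : Function.Injective (U ρ ^ i) := by
    rw [← map_pow]
    exact (U.apply_bijective _).injective
  have htrans : Function.Bijective fun f : Fin m → V =>
      ∑ i : Fin m, (U ρ ^ (i : ℕ)) (ι (f i)) :=
    bijective_sum_of_isInternal_range (φ := fun i : Fin m => (U ρ ^ (i : ℕ)) ∘ₗ ι)
      (fun i => (hUρ i).comp hinj) (by simpa only [LinearMap.range_comp] using hint)
  have hφ : Function.Bijective fun f : Fin m → V => ∑ j, φ j (f j) :=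
    bijective_sum_relativeTrace hζ hB htrans
  have hφinj := injective_of_injective_sum hφ.injective
  have hcB (j : Fin m) : (ζ ^ (j : ℕ) • B) ^ m = 1 := by
    rw [smul_pow, hB, pow_right_comm, hζ.pow_eq_one, one_pow, one_smul]
  have hcBH (j : Fin m) (h : H) :
      SemiconjBy (ζ ^ (j : ℕ) • B) (V₀ (MulAut.conjNormal ρ h)) (V₀ h) := by
    rw [SemiconjBy, smul_mul_assoc, (hBH h).eq, mul_smul_comm]
  choose X hX using fun j => exists_isIntertwiningMap_of_injective (hφinj j)
    (exists_comp_relativeTrace_eq hG hρ (hcB j) (hcBH j) hι)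
  refine ⟨X, exists_linearEquiv_pi_of_bijective_sum hφ hX, fun j => ?_⟩
  ext h v : 2
  exact hφinj j (((hX j).isIntertwining h v).trans
    ((isIntertwiningMap_relativeTrace (hcBH j) hι).isIntertwining h v).symm)

end Field

end RelativeTrace

section AlternatingFour

variable {G : Type*} [Group G] {σ ρ τ : G}

theorem conj_eq_mul_of_pow_eq_one (hσ : σ ^ 2 = 1) (hρ : ρ ^ 3 = 1) (hσρ : (σ * ρ) ^ 3 = 1)
    (hτ : τ = ρ * σ * ρ⁻¹) : ρ * τ * ρ⁻¹ = τ * σ := by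
  have hτ2 : τ ^ 2 = 1 := by rw [hτ, conj_pow, hσ, mul_one, mul_inv_cancel]
  have hprod : σ * τ * (ρ * τ * ρ⁻¹) = 1 := by
    calc σ * τ * (ρ * τ * ρ⁻¹) = (σ * ρ) ^ 3 * (ρ ^ 3)⁻¹ := by simp only [hτ, pow_three]; group
      _ = 1 := by rw [hσρ, hρ, inv_one, mul_one]
  calc ρ * τ * ρ⁻¹ = (σ * τ)⁻¹ := eq_inv_of_mul_eq_one_right hprod
    _ = τ⁻¹ * σ⁻¹ := mul_inv_rev σ τ
    _ = τ * σ := by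
      rw [inv_eq_of_mul_eq_one_left ((sq τ).symm.trans hτ2),
        inv_eq_of_mul_eq_one_left ((sq σ).symm.trans hσ)]

theorem normal_closure_pair_of_conj (hgen : Subgroup.closure {σ, ρ} = ⊤) (hτ : τ = ρ * σ * ρ⁻¹)
    (hρτ : ρ * τ * ρ⁻¹ = τ * σ) : (Subgroup.closure {σ, τ}).Normal := by
  have hσH : σ ∈ Subgroup.closure {σ, τ} := Subgroup.subset_closure (Set.mem_insert _ _)
  have hτH : τ ∈ Subgroup.closure {σ, τ} := Subgroup.subset_closure (Set.mem_insert_of_mem _ rfl)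
  have hclosure : Subgroup.closure {τ, τ * σ} = Subgroup.closure {σ, τ} := by
    have hτσ : τ ∈ Subgroup.closure {τ, τ * σ} := Subgroup.subset_closure (Set.mem_insert _ _)
    have hmul : τ * σ ∈ Subgroup.closure {τ, τ * σ} :=
      Subgroup.subset_closure (Set.mem_insert_of_mem _ rfl)
    refine le_antisymm ?_ ?_ <;> rw [Subgroup.closure_le, Set.pair_subset_iff]
    · exact ⟨hτH, mul_mem hτH hσH⟩
    · exact ⟨(Subgroup.mul_mem_cancel_left _ hτσ).mp hmul, hτσ⟩
  have hρ : ρ ∈ Subgroup.normalizer (Subgroup.closure {σ, τ} : Set G) := by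
    rw [Subgroup.mem_normalizer_iff_map_conj_eq, MonoidHom.map_closure, Set.image_pair]
    simp only [MonoidHom.coe_coe, MulAut.conj_apply, ← hτ, hρτ, hclosure]
  rw [← Subgroup.normalizer_eq_top_iff, eq_top_iff, ← hgen, Subgroup.closure_le,
    Set.pair_subset_iff]
  exact ⟨Subgroup.le_normalizer hσH, hρ⟩

theorem semiconjBy_map_conjNormal_of_closure_pair {M : Type*} [Monoid M]
    [(Subgroup.closure {σ, τ}).Normal] (hτ : τ = ρ * σ * ρ⁻¹) (hρτ : ρ * τ * ρ⁻¹ = τ * σ)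
    {f : Subgroup.closure {σ, τ} →* M} {b : M}
    (hσH : σ ∈ Subgroup.closure {σ, τ}) (hτH : τ ∈ Subgroup.closure {σ, τ})
    (hbσ : SemiconjBy b (f ⟨τ, hτH⟩) (f ⟨σ, hσH⟩))
    (hbτ : SemiconjBy b (f ⟨τ, hτH⟩ * f ⟨σ, hσH⟩) (f ⟨τ, hτH⟩)) (h : Subgroup.closure {σ, τ}) :
    SemiconjBy b (f (MulAut.conjNormal ρ h)) (f h) := by
  have hconjσ : MulAut.conjNormal ρ ⟨σ, hσH⟩ = (⟨τ, hτH⟩ : Subgroup.closure {σ, τ}) :=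
    Subtype.ext hτ.symm
  have hconjτ : MulAut.conjNormal ρ ⟨τ, hτH⟩ =
      (⟨τ, hτH⟩ * ⟨σ, hσH⟩ : Subgroup.closure {σ, τ}) :=
    Subtype.ext hρτ
  refine semiconjBy_map_of_closure_eq_top (f := f.comp (MulAut.conjNormal ρ).toMonoidHom) (g := f)
    (Subgroup.closure_closure_coe_preimage (k := {σ, τ})) ?_ h
  rintro x (hx | hx)
  · obtain rfl : x = ⟨σ, hσH⟩ := Subtype.ext hx
    simpa only [MonoidHom.comp_apply, MulEquiv.toMonoidHom_eq_coe, MonoidHom.coe_coe, hconjσ]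
      using hbσ
  · obtain rfl : x = ⟨τ, hτH⟩ := Subtype.ext hx
    simpa only [MonoidHom.comp_apply, MulEquiv.toMonoidHom_eq_coe, MonoidHom.coe_coe, hconjτ,
      map_mul] using hbτ

end AlternatingFour

section TwistMatrix

variable {k : Type} [Field k] {ζ : k} {n : ℕ}

theorem jordanBlock_zero_mul_diagonal_pow (c : k) (n : ℕ) :
    jordanBlock k n 0 * Matrix.diagonal (fun i : Fin n => c ^ (i : ℕ)) =
      c • (Matrix.diagonal (fun i : Fin n => c ^ (i : ℕ)) * jordanBlock k n 0) := by
  ext i j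
  rw [Matrix.smul_apply, Matrix.diagonal_mul, Matrix.mul_diagonal, jordanBlock, Matrix.of_apply,
    smul_eq_mul]
  split_ifs with hij hsucc
  · simp
  · rw [← hsucc]
    ring
  · simp

/-- The matrix `B` of order three on `V₀` with `B V₀(ρhρ⁻¹) = V₀(h) B`; its inverse is the operator
by which `ρ` acts on an extension of `V₀` to `A₄`. -/
def twistMatrix (ζ : k) (n : ℕ) : Matrix (Fin n ⊕ Fin n) (Fin n ⊕ Fin n) k :=
  Matrix.fromBlocks (ζ ^ 2 • Matrix.diagonal fun i : Fin n => ζ ^ (i : ℕ)) 0 0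
    (Matrix.diagonal fun i : Fin n => ζ ^ (i : ℕ))

theorem twistMatrix_pow_three (hζ : ζ ^ 3 = 1) (n : ℕ) : twistMatrix ζ n ^ 3 = 1 := by
  have hdiag : (Matrix.diagonal fun i : Fin n => ζ ^ (i : ℕ)) ^ 3 = 1 := by
    rw [Matrix.diagonal_pow, ← Matrix.diagonal_one]
    congr 1
    ext i
    rw [Pi.pow_apply, pow_right_comm, hζ, one_pow]
  rw [twistMatrix, Matrix.fromBlocks_diagonal_pow, smul_pow, pow_right_comm, hζ, one_pow, hdiag,
    one_smul, Matrix.fromBlocks_one]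

theorem semiconjBy_twistMatrix_fromBlocks {A A' : Matrix (Fin n) (Fin n) k}
    (h : ζ ^ 2 • (Matrix.diagonal (fun i : Fin n => ζ ^ (i : ℕ)) * A) =
      A' * Matrix.diagonal fun i : Fin n => ζ ^ (i : ℕ)) :
    SemiconjBy (twistMatrix ζ n) (Matrix.fromBlocks 1 A 0 1) (Matrix.fromBlocks 1 A' 0 1) := by
  simp [SemiconjBy, twistMatrix, Matrix.fromBlocks_multiply, h]

theorem semiconjBy_twistMatrix_conj_sigma (hζ : ζ ^ 3 = 1) (n : ℕ) :
    SemiconjBy (twistMatrix ζ n)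
      (Matrix.fromBlocks 1 (ζ ^ 2 • (1 : Matrix (Fin n) (Fin n) k) + jordanBlock k n 0) 0 1)
      (Matrix.fromBlocks 1 (ζ • (1 + jordanBlock k n 0)) 0 1) := by
  apply semiconjBy_twistMatrix_fromBlocks
  simp only [smul_mul_assoc, mul_smul_comm, mul_add, add_mul, mul_one, one_mul,
    jordanBlock_zero_mul_diagonal_pow]
  linear_combination (norm := module) ζ • hζ •
    (Matrix.diagonal fun i : Fin n => ζ ^ (i : ℕ))

theorem semiconjBy_twistMatrix_conj_tau [CharP k 2] (hζ : IsPrimitiveRoot ζ 3) (n : ℕ) :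
    SemiconjBy (twistMatrix ζ n)
      (Matrix.fromBlocks 1 (ζ ^ 2 • (1 : Matrix (Fin n) (Fin n) k) + jordanBlock k n 0) 0 1 *
        Matrix.fromBlocks 1 (ζ • (1 + jordanBlock k n 0)) 0 1)
      (Matrix.fromBlocks 1
        (ζ ^ 2 • (1 : Matrix (Fin n) (Fin n) k) + jordanBlock k n 0) 0 1) := by
  have htwo : (2 : k) = 0 := CharP.ofNat_eq_zero k 2
  have hcube : ζ ^ 3 = 1 := hζ.pow_eq_one
  have hsum : 1 + ζ + ζ ^ 2 = 0 := by
    simpa [Finset.sum_range_succ] using hζ.geom_sum_eq_zero (by norm_num)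
  have hoff : ζ • (1 + jordanBlock k n 0) + (ζ ^ 2 • 1 + jordanBlock k n 0) =
      1 + ζ ^ 2 • jordanBlock k n 0 := by
    linear_combination (norm := module) (hsum - htwo) • (1 : Matrix (Fin n) (Fin n) k) +
      (hsum - htwo * ζ ^ 2) • jordanBlock k n 0
  rw [Matrix.fromBlocks_multiply]
  simp only [mul_one, mul_zero, zero_mul, add_zero, zero_add, one_mul, hoff]
  apply semiconjBy_twistMatrix_fromBlocks
  simp only [smul_mul_assoc, mul_smul_comm, mul_add, add_mul, mul_one, one_mul,
    jordanBlock_zero_mul_diagonal_pow]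
  linear_combination (norm := module) (ζ * hcube) •
    (Matrix.diagonal (fun i : Fin n => ζ ^ (i : ℕ)) * jordanBlock k n 0)

end TwistMatrix

theorem stmt_14_general (k : Type) [Field k] [CharP k 2] (ζ : k) (hζ : IsPrimitiveRoot ζ 3)
    (G : Type*) [Group G] (σ ρ : G)
    (hσ : σ ^ 2 = 1) (hρ : ρ ^ 3 = 1) (hσρ : (σ * ρ) ^ 3 = 1)
    (hgen : Subgroup.closure {σ, ρ} = ⊤)
    (τ : G) (hτ : τ = ρ * σ * ρ⁻¹)
    (H : Subgroup G) (hH : H = Subgroup.closure {σ, τ})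
    (hσH : σ ∈ H) (hτH : τ ∈ H) (n : ℕ)
    (V0 : Representation k H (Fin n ⊕ Fin n → k))
    (hV0σ : V0 ⟨σ, hσH⟩ =
      Matrix.toLin' (Matrix.fromBlocks 1 (ζ • (1 + jordanBlock k n 0)) 0 1))
    (hV0τ : V0 ⟨τ, hτH⟩ =
      Matrix.toLin' (Matrix.fromBlocks 1
        (ζ ^ 2 • (1 : Matrix (Fin n) (Fin n) k) + jordanBlock k n 0) 0 1))
    (W : Type*) [AddCommGroup W] [Module k W] (U : Representation k G W)
    (ι : (Fin n ⊕ Fin n → k) →ₗ[k] W) (hinj : Function.Injective ι)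
    (hequiv : V0.IsIntertwiningMap (U.comp H.subtype) ι)
    (hint : DirectSum.IsInternal fun i : Fin 3 =>
      Submodule.map (U ρ ^ (i : ℕ)) (LinearMap.range ι)) :
    ∃ Wr : Fin 3 → Representation k G (Fin n ⊕ Fin n → k),
      (∃ e : W ≃ₗ[k] (Fin 3 → (Fin n ⊕ Fin n → k)),
        ∀ (g : G) (w : W) (i : Fin 3), e (U g w) i = Wr i g (e w i)) ∧
      ∀ i : Fin 3, (Wr i).comp H.subtype = V0 := by
  subst hH
  have hρτ := conj_eq_mul_of_pow_eq_one hσ hρ hσρ hτ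
  have hnormal := normal_closure_pair_of_conj hgen hτ hρτ
  have hsup : Subgroup.closure {σ, τ} ⊔ Subgroup.zpowers ρ = ⊤ := by
    rw [eq_top_iff, ← hgen, Subgroup.closure_le, Set.pair_subset_iff]
    exact ⟨Subgroup.mem_sup_left hσH, Subgroup.mem_sup_right (Subgroup.mem_zpowers ρ)⟩
  refine exists_decomposition_of_conj_semiconjBy hζ hρ hsup hinj hequiv hint
    (B := Matrix.toLinAlgEquiv' (twistMatrix ζ n)) ?_ ?_
  · rw [← map_pow, twistMatrix_pow_three hζ.pow_eq_one, map_one]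
  · refine semiconjBy_map_conjNormal_of_closure_pair hτ hρτ hσH hτH ?_ ?_
    · rw [hV0σ, hV0τ]
      exact (semiconjBy_twistMatrix_conj_sigma hζ.pow_eq_one n).map Matrix.toLinAlgEquiv'
    · rw [hV0σ, hV0τ, Module.End.mul_eq_comp, ← Matrix.toLin'_mul]
      exact (semiconjBy_twistMatrix_conj_tau hζ n).map Matrix.toLinAlgEquiv'

/-- **Lemma.** Let `G = A₄ = ⟨σ, ρ⟩`, `τ = ρσρ⁻¹`, `H = ⟨σ, τ⟩` its Sylow 2-subgroup,
and let `V₀` be the `2n`-dimensional representation of `H` given by the stated block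
matrices (the case `φ = 0`).  Then the induced representation `Ind_H^G V₀` — encoded by
a `G`-representation `U` with an injective `H`-equivariant embedding of `V₀` whose three
`ρ`-translates form an internal direct sum — decomposes as `W₀ ⊕ W₁ ⊕ W₂` for
`G`-representations `W₀, W₁, W₂` each of whose restrictions to `H` is isomorphic
to `V₀`. -/
theorem stmt_14 (k : Type) [Field k] [IsAlgClosed k] [CharP k 2]
    (ζ : k) (hζ : IsPrimitiveRoot ζ 3)
    (G : Type) [Group G] (σ ρ : G)
    (hσ : σ ^ 2 = 1) (hρ : ρ ^ 3 = 1) (hσρ : (σ * ρ) ^ 3 = 1)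
    (hcard : Nat.card G = 12) (hgen : Subgroup.closure {σ, ρ} = ⊤)
    (τ : G) (hτ : τ = ρ * σ * ρ⁻¹)
    (H : Subgroup G) (hH : H = Subgroup.closure {σ, τ})
    (hσH : σ ∈ H) (hτH : τ ∈ H)
    (n : ℕ) (hn : 1 ≤ n)
    -- the representation V₀ of H
    (V0 : Representation k ↥H (Fin n ⊕ Fin n → k))
    (hV0σ : V0 ⟨σ, hσH⟩ =
      Matrix.toLin' (Matrix.fromBlocks 1 (ζ • (1 + jordanBlock k n 0)) 0 1))
    (hV0τ : V0 ⟨τ, hτH⟩ =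
      Matrix.toLin' (Matrix.fromBlocks 1
        (ζ ^ 2 • (1 : Matrix (Fin n) (Fin n) k) + jordanBlock k n 0) 0 1))
    -- a G-representation U realizing Ind_H^G V₀
    (W : Type) [AddCommGroup W] [Module k W]
    (U : Representation k G W)
    (ι : (Fin n ⊕ Fin n → k) →ₗ[k] W)
    (hinj : Function.Injective ι)
    (hequiv : ∀ (h : ↥H) (v : Fin n ⊕ Fin n → k), ι (V0 h v) = U (h : G) (ι v))
    (hint : DirectSum.IsInternal fun i : Fin 3 =>
      Submodule.map (U ρ ^ (i : ℕ)) (LinearMap.range ι)) :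
    -- conclusion: Ind_H^G V₀ ≅ W₀ ⊕ W₁ ⊕ W₂ with Res_H^G Wᵢ ≅ V₀
    ∃ Wr : Fin 3 → Representation k G (Fin n ⊕ Fin n → k),
      (∃ e : W ≃ₗ[k] (Fin 3 → (Fin n ⊕ Fin n → k)),
        ∀ (g : G) (w : W) (i : Fin 3), e (U g w) i = Wr i g (e w i)) ∧
      ∀ i : Fin 3,
        ∃ e' : (Fin n ⊕ Fin n → k) ≃ₗ[k] (Fin n ⊕ Fin n → k),
          ∀ (h : ↥H) (v : Fin n ⊕ Fin n → k), e' (Wr i (h : G) v) = V0 h (e' v) := by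
  obtain ⟨Wr, he, hres⟩ := stmt_14_general k ζ hζ G σ ρ hσ hρ hσρ hgen τ hτ H hH hσH hτH n V0
    hV0σ hV0τ W U ι hinj ⟨hequiv⟩ hint
  exact ⟨Wr, he, fun i => ⟨.refl k _, fun h => LinearMap.congr_fun (DFunLike.congr_fun (hres i) h)⟩⟩
end
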